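/- arXiv:1808.04948 — 2 statements merged into one kernel-verified Lean document; each statement's English description precedes it below -/
import Mathlib

section
/- Asymptotically almost surely, the number of subtrees of a uniformly random labelled tree on n vertices is at least 1.37135^n; that is, the probability that c(𝒯_n) ≥ 1.37135^n tends to 1 as n → ∞. -/
open Filter Topology

/-!
Root a tree at a vertex `r` and record it as its parent map `f : Fin n → Fin n`, with `f r = r`.
A vertex set containing `r` and closed under `f` induces a subtree. Call `x` a leaf if it has no
preimage under `f`, and let `chainLength f x ∈ {1, 2, 3}` be the number of vertices, cut off at `3`,
of the pendant path `x, f x, f (f x)` in which every vertex after `x` has its predecessor as its only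
preimage. Different leaves have disjoint pendant paths, and an initial segment of each may be deleted
independently, so there are at least `∏ (1 + chainLength f x)` subtrees (`prod_le_subtreeCount`).
The logarithm of this product is `chainWeight f`.

Now let `f` be a uniformly random map `Fin n → Fin n`. The values `f x` are independent, and the
expected numbers of `x` with `chainLength f x ≥ 1, 2, 3` are asymptotically at least `n / e`,
`n / e²`, `n / e³`, so the mean of `chainWeight f` is eventually at least `(log 1.37135 + δ) n`
(`mean_chainWeight`), because
`e⁻¹ log 2 + e⁻² log (3/2) + e⁻³ log (4/3) ≈ 0.324 > 0.3158 ≈ log 1.37135`.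
Changing one value of `f` changes `chainWeight f` by at most `18`, so McDiarmid's inequality
(`mcdiarmid_tail`) gives `chainWeight f ≥ n log 1.37135` outside an exponentially small set of maps.

Every tree is the graph of some parent map (`exists_parentMap`), so at most `n ^ n * exp (-c n)` trees
are exceptional, whereas there are at least `n ^ (n - 2)` trees (`tree_count`, the lower half of
Cayley's formula, by Pitman's double counting of rooted forests). The exceptional proportion is
therefore at most `n ^ 2 * exp (-c n)`.
-/

/-- The number of subtrees of a graph `G` on `Fin n`: the number of (nonempty) vertex
subsets inducing a connected subgraph. -/
noncomputable def subtreeCount {n : ℕ} (G : SimpleGraph (Fin n)) : ℕ :=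
  Nat.card {S : Set (Fin n) // (G.induce S).Connected}

/-- The probability that a uniformly random labelled tree on `n` vertices satisfies `p`. -/
noncomputable def treeProb (n : ℕ) (p : SimpleGraph (Fin n) → Prop) : ℝ :=
  (Nat.card {G : SimpleGraph (Fin n) // G.IsTree ∧ p G} : ℝ) /
    (Nat.card {G : SimpleGraph (Fin n) // G.IsTree} : ℝ)

/-! ### McDiarmid's inequality for uniform random functions -/

/-- Hoeffding's lemma for a centred bounded variable on a finite uniform space. -/
lemma hoeffding_finite {α : Type*} [Fintype α] [Nonempty α] (X : α → ℝ) (c t : ℝ) (hc : 0 < c)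
    (hX : ∑ a, X a = 0) (hb : ∀ a, |X a| ≤ c) :
    ∑ a, Real.exp (t * X a) ≤ Fintype.card α * Real.exp ((t * c) ^ 2 / 2) := by
  have key : ∀ a, Real.exp (t * X a) ≤ Real.cosh (t * c) + X a * (Real.sinh (t * c) / c) := by
    intro a
    have h1 := abs_le.mp (hb a)
    have := (_root_.convexOn_exp).2 (Set.mem_univ (t * c)) (Set.mem_univ (-(t * c)))
      (show 0 ≤ (c + X a) / (2 * c) from div_nonneg (by linarith) (by linarith))
      (show 0 ≤ (c - X a) / (2 * c) from div_nonneg (by linarith) (by linarith))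
      (by field_simp; ring)
    simp only [smul_eq_mul] at this
    have e1 : (c + X a) / (2 * c) * (t * c) + (c - X a) / (2 * c) * (-(t * c)) = t * X a := by
      field_simp; ring
    rw [e1] at this
    refine this.trans (le_of_eq ?_)
    rw [Real.cosh_eq, Real.sinh_eq]
    field_simp; ring
  calc ∑ a, Real.exp (t * X a) ≤ ∑ a, (Real.cosh (t * c) + X a * (Real.sinh (t * c) / c)) :=
        Finset.sum_le_sum fun a _ => key a
    _ = Fintype.card α * Real.cosh (t * c) := by
        rw [Finset.sum_add_distrib, ← Finset.sum_mul, hX]; simp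
    _ ≤ _ := by gcongr; exact Real.cosh_le_exp_half_sq _

/-- Exponential moment form of McDiarmid's inequality, by averaging out one coordinate at a time. -/
lemma mcdiarmid_mgf {α : Type*} [Fintype α] [Nonempty α] (c t : ℝ) (hc : 0 < c) :
    ∀ (m : ℕ) (F : (Fin m → α) → ℝ),
      (∀ f i a, |F (Function.update f i a) - F f| ≤ c) →
      ∑ f, Real.exp (t * ((∑ g, F g) / (Fintype.card α : ℝ) ^ m - F f)) ≤
        (Fintype.card α : ℝ) ^ m * Real.exp (m * ((t * c) ^ 2 / 2)) := by
  have hq : (0 : ℝ) < Fintype.card α := by exact_mod_cast Fintype.card_pos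
  intro m
  induction m with
  | zero => intro F _; simp
  | succ m ih =>
    intro F hF
    set q : ℝ := (Fintype.card α : ℝ) with hqdef
    have split : ∀ G : (Fin (m + 1) → α) → ℝ, ∑ f, G f = ∑ a, ∑ f, G (Fin.cons a f) := by
      intro G
      rw [← Fintype.sum_prod_type']
      exact (Equiv.sum_comp (Fin.consEquiv fun _ => α) G).symm
    set μ : α → ℝ := fun a => (∑ g, F (Fin.cons a g)) / q ^ m with hμ
    have hmean : (∑ g, F g) / q ^ (m + 1) = (∑ a, μ a) / q := by
      rw [split, hμ, ← Finset.sum_div, div_div, pow_succ]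
    set M := (∑ a, μ a) / q with hM
    have hdiff : ∀ a b, |μ a - μ b| ≤ c := by
      intro a b
      have hcard : (Fintype.card (Fin m → α) : ℝ) = q ^ m := by simp [hqdef]
      have : μ a - μ b = (∑ g, (F (Fin.cons a g) - F (Fin.cons b g))) / q ^ m := by
        simp only [hμ, Finset.sum_sub_distrib, sub_div]
      rw [this, abs_div, abs_of_pos (pow_pos hq m), div_le_iff₀ (pow_pos hq m)]
      calc |∑ g, (F (Fin.cons a g) - F (Fin.cons b g))|
          ≤ ∑ g, |F (Fin.cons a g) - F (Fin.cons b g)| := Finset.abs_sum_le_sum_abs _ _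
        _ ≤ ∑ _g : Fin m → α, c := by
            refine Finset.sum_le_sum fun g _ => ?_
            have := hF (Fin.cons b g) 0 a
            rwa [Fin.update_cons_zero] at this
        _ = c * q ^ m := by simp [hqdef, mul_comm]
    have hh := hoeffding_finite (fun a => M - μ a) c t hc
      (by simp only [Finset.sum_sub_distrib, Finset.sum_const, Finset.card_univ, nsmul_eq_mul]
          rw [← hqdef, hM]; field_simp; ring)
      (by
        intro a
        have : M - μ a = (∑ b, (μ b - μ a)) / q := by
          simp only [Finset.sum_sub_distrib, Finset.sum_const, Finset.card_univ, nsmul_eq_mul, hM]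
          rw [← hqdef]; field_simp
        rw [this, abs_div, abs_of_pos hq, div_le_iff₀ hq]
        calc |∑ b, (μ b - μ a)| ≤ ∑ b, |μ b - μ a| := Finset.abs_sum_le_sum_abs _ _
          _ ≤ ∑ _b : α, c := Finset.sum_le_sum fun b _ => hdiff b a
          _ = c * q := by simp [hqdef, mul_comm])
    rw [hmean, split]
    calc ∑ a, ∑ f, Real.exp (t * (M - F (Fin.cons a f)))
        = ∑ a, Real.exp (t * (M - μ a)) * ∑ f, Real.exp (t * (μ a - F (Fin.cons a f))) := by
          refine Finset.sum_congr rfl fun a _ => ?_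
          rw [Finset.mul_sum]
          refine Finset.sum_congr rfl fun f _ => ?_
          rw [← Real.exp_add]; congr 1; ring
      _ ≤ ∑ a, Real.exp (t * (M - μ a)) * (q ^ m * Real.exp (m * ((t * c) ^ 2 / 2))) := by
          refine Finset.sum_le_sum fun a _ => ?_
          gcongr
          refine ih (fun g => F (Fin.cons a g)) ?_
          intro f i b
          have := hF (Fin.cons a f) i.succ b
          rwa [← Fin.cons_update] at this
      _ = (∑ a, Real.exp (t * (M - μ a))) * (q ^ m * Real.exp (m * ((t * c) ^ 2 / 2))) := by
          rw [Finset.sum_mul]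
      _ ≤ (q * Real.exp ((t * c) ^ 2 / 2)) * (q ^ m * Real.exp (m * ((t * c) ^ 2 / 2))) := by
          gcongr
      _ = _ := by
          push_cast
          rw [show ((m : ℝ) + 1) * ((t * c) ^ 2 / 2) = (t * c) ^ 2 / 2 + m * ((t * c) ^ 2 / 2) by ring,
            Real.exp_add]
          ring

/-- Lower tail of a function with bounded differences: the number of points at which it falls short
of its mean by `δ * m`. -/
lemma mcdiarmid_tail {α : Type*} [Fintype α] [Nonempty α] (m : ℕ) (F : (Fin m → α) → ℝ)
    (c δ a : ℝ) (hc : 0 < c) (hδ : 0 < δ)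
    (hF : ∀ f i a, |F (Function.update f i a) - F f| ≤ c)
    (hmean : (a + δ) * m * (Fintype.card α : ℝ) ^ m ≤ ∑ f, F f) :
    (Nat.card {f : Fin m → α // F f < a * m} : ℝ) ≤
      (Fintype.card α : ℝ) ^ m * Real.exp (-(m * (δ ^ 2 / (2 * c ^ 2)))) := by
  classical
  have hq : (0 : ℝ) < Fintype.card α := by exact_mod_cast Fintype.card_pos
  set q : ℝ := (Fintype.card α : ℝ) with hqdef
  have h := mcdiarmid_mgf c (δ / c ^ 2) hc m F hF
  rw [← hqdef] at h
  have hM : (a + δ) * m ≤ (∑ g, F g) / q ^ m := by rwa [le_div_iff₀ (pow_pos hq m)]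
  have h2 : (Nat.card {f : Fin m → α // F f < a * m} : ℝ) * Real.exp (m * (δ ^ 2 / c ^ 2)) ≤
      ∑ f, Real.exp (δ / c ^ 2 * ((∑ g, F g) / q ^ m - F f)) := by
    rw [Nat.card_eq_fintype_card, Fintype.card_subtype, ← nsmul_eq_mul, ← Finset.sum_const]
    refine le_trans (Finset.sum_le_sum fun f hf => ?_)
      (Finset.sum_le_sum_of_subset_of_nonneg (Finset.subset_univ _)
        fun f _ _ => (Real.exp_pos _).le)
    rw [Finset.mem_filter] at hf
    rw [Real.exp_le_exp]
    calc (m : ℝ) * (δ ^ 2 / c ^ 2) = δ / c ^ 2 * (δ * m) := by ring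
      _ ≤ _ := by gcongr; linarith [hf.2]
  have h3 := h2.trans h
  rw [← le_div_iff₀ (Real.exp_pos _), mul_div_assoc, ← Real.exp_sub] at h3
  refine h3.trans (le_of_eq ?_)
  congr 2
  field_simp
  ring
/-! ### Counting rooted forests -/

/-- Every orbit of `f` reaches a fixed point, i.e. `f` has no cycles other than fixed points: `f` is
the parent map of a rooted forest whose roots are the fixed points. -/
def EventuallyFixed {V : Type*} (f : V → V) : Prop := ∀ x, ∃ m, f (f^[m] x) = f^[m] x

/-- Parent maps of rooted labelled forests on `n` vertices with exactly `k` roots (which are sent to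
themselves). -/
def forestMaps (n k : ℕ) : Set (Fin n → Fin n) :=
  {f | EventuallyFixed f ∧ Set.ncard {x | f x = x} = k}

lemma iterate_update_eq {V : Type*} [DecidableEq V] (f : V → V) (r v x : V) (m : ℕ)
    (h : ∀ j < m, f^[j] x ≠ r) : (Function.update f r v)^[m] x = f^[m] x := by
  induction m with
  | zero => rfl
  | succ m ih =>
    rw [Function.iterate_succ_apply', Function.iterate_succ_apply',
      ih fun j hj => h j (by omega), Function.update_of_ne (h m (by omega))]

lemma iterate_fixed {V : Type*} {f : V → V} {x : V} {m : ℕ} (h : f (f^[m] x) = f^[m] x) (j : ℕ)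
    (hj : m ≤ j) : f^[j] x = f^[m] x := by
  obtain ⟨i, rfl⟩ := Nat.exists_eq_add_of_le hj
  rw [add_comm, Function.iterate_add_apply, Function.iterate_fixed h]

lemma update_mem_forestMaps {n k : ℕ} {f : Fin n → Fin n} {r v : Fin n}
    (hf : f ∈ forestMaps n (k + 1)) (hr : f r = r) (hv : ∀ m, f^[m] v ≠ r) :
    Function.update f r v ∈ forestMaps n k := by
  obtain ⟨h1, h2⟩ := hf
  have avoid : ∀ x, (∀ m, f^[m] x ≠ r) →
      ∃ m, Function.update f r v ((Function.update f r v)^[m] x) = (Function.update f r v)^[m] x := by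
    intro x hx
    obtain ⟨m, hm⟩ := h1 x
    refine ⟨m, ?_⟩
    rw [iterate_update_eq f r v x m fun j _ => hx j, Function.update_of_ne (hx m), hm]
  constructor
  · intro x
    by_cases hx : ∀ m, f^[m] x ≠ r
    · exact avoid x hx
    · push Not at hx
      classical
      have hs := Nat.find_spec hx
      have hmin : ∀ j < Nat.find hx, f^[j] x ≠ r := fun j hj => Nat.find_min hx hj
      set m := Nat.find hx
      obtain ⟨p, hp⟩ := avoid v hv
      refine ⟨p + (m + 1), ?_⟩
      have e : (Function.update f r v)^[p + (m + 1)] x = (Function.update f r v)^[p] v := by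
        rw [Function.iterate_add_apply, Function.iterate_succ_apply',
          iterate_update_eq f r v x m hmin, hs, Function.update_self]
      rw [e, hp]
  · have hset : {x | Function.update f r v x = x} = {x | f x = x} \ {r} := by
      ext x
      have := hv 0
      by_cases hx : x = r
      · subst hx; simpa using this
      · simp [hx]
    rw [hset, Set.ncard_sdiff_singleton_of_mem (show r ∈ {x | f x = x} from hr), h2]
    simp

/-- Pitman's double counting: a forest with `k + 1` roots becomes one with `k` roots by choosing a
vertex `v` and hanging one of the `k` roots of the other components below `v`; the result together
with the moved root determines the original forest and `v`. -/
lemma forest_step (n k : ℕ) :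
    (forestMaps n (k + 1)).ncard * (n * k) ≤ (forestMaps n k).ncard * (n - k) := by
  classical
  set P : Finset ((Fin n → Fin n) × (Fin n × Fin n)) := Finset.univ.filter fun p =>
    p.1 ∈ forestMaps n (k + 1) ∧ p.1 p.2.2 = p.2.2 ∧ ∀ m, p.1^[m] p.2.1 ≠ p.2.2 with hP
  set Q : Finset ((Fin n → Fin n) × Fin n) := Finset.univ.filter fun p =>
    p.1 ∈ forestMaps n k ∧ p.1 p.2 ≠ p.2 with hQ
  have hPQ : P.card ≤ Q.card := by
    refine Finset.card_le_card_of_injOn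
      (fun p => (Function.update p.1 p.2.2 p.2.1, p.2.2)) ?_ ?_
    · rintro ⟨f, v, r⟩ hp
      simp only [hP, Finset.coe_filter, Finset.mem_univ, true_and, Set.mem_ofPred_eq] at hp
      simp only [hQ, Finset.coe_filter, Finset.mem_univ, true_and, Set.mem_ofPred_eq,
        Function.update_self]
      exact ⟨update_mem_forestMaps hp.1 hp.2.1 hp.2.2, hp.2.2 0⟩
    · rintro ⟨f, v, r⟩ hp ⟨f', v', r'⟩ hp' h
      simp only [hP, Finset.coe_filter, Finset.mem_univ, true_and, Set.mem_ofPred_eq] at hp hp'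
      simp only [Prod.mk.injEq] at h
      obtain ⟨h, rfl⟩ := h
      have hvv : v = v' := by simpa using congrFun h r
      subst hvv
      have : f = f' := by
        funext x
        by_cases hx : x = r
        · rw [hx, hp.2.1, hp'.2.1]
        · simpa [hx] using congrFun h x
      rw [this]
  have hQc : Q.card = (forestMaps n k).ncard * (n - k) := by
    rw [Set.ncard_eq_toFinset_card', ← smul_eq_mul]
    have := Finset.card_eq_sum_card_fiberwise (s := Q) (t := (forestMaps n k).toFinset)
      (f := Prod.fst) (by
        intro p hp
        simp only [hQ, Finset.coe_filter, Finset.mem_univ, true_and, Set.mem_ofPred_eq] at hp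
        simpa using hp.1)
    rw [this]
    refine Finset.sum_const_nat fun f hf => ?_
    rw [Set.mem_toFinset] at hf
    have hk := hf.2
    have e : (Finset.univ.filter fun x => f x ≠ x).card = n - k := by
      have := Finset.card_filter_add_card_filter_not (s := (Finset.univ : Finset (Fin n)))
        (fun x => f x = x)
      rw [Set.ncard_eq_toFinset_card'] at hk
      simp only [Set.toFinset_ofPred] at hk
      simp only [Finset.card_univ, Fintype.card_fin] at this
      simp only [ne_eq]
      omega
    rw [← e]
    refine Finset.card_bij' (fun p _ => p.2) (fun x _ => (f, x)) ?_ ?_ ?_ ?_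
    · rintro ⟨g, x⟩ hp
      simp only [hQ, Finset.mem_filter, Finset.mem_univ, true_and] at hp ⊢
      rw [← hp.2]; exact hp.1.2
    · intro x hx
      simp only [hQ, Finset.mem_filter, Finset.mem_univ, true_and, and_true] at hx ⊢
      exact ⟨hf, hx⟩
    · rintro ⟨g, x⟩ hp
      simp only [Finset.mem_filter] at hp
      simp [← hp.2]
    · simp
  have hPc : (forestMaps n (k + 1)).ncard * (n * k) ≤ P.card := by
    rw [Set.ncard_eq_toFinset_card']
    have := Finset.card_eq_sum_card_fiberwise (s := P)
      (t := (forestMaps n (k + 1)).toFinset ×ˢ (Finset.univ : Finset (Fin n)))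
      (f := fun p => (p.1, p.2.1)) (by
        intro p hp
        simp only [hP, Finset.coe_filter, Finset.mem_univ, true_and, Set.mem_ofPred_eq] at hp
        simpa using hp.1)
    rw [this, ← mul_assoc]
    have hc : (forestMaps n (k + 1)).toFinset.card * n =
      ((forestMaps n (k + 1)).toFinset ×ˢ (Finset.univ : Finset (Fin n))).card := by simp
    rw [hc, ← smul_eq_mul]
    refine Finset.card_nsmul_le_sum _ _ _ ?_
    rintro ⟨f, v⟩ hfv
    simp only [Finset.mem_product, Set.mem_toFinset, Finset.mem_univ, and_true] at hfv
    obtain ⟨m, hm⟩ := hfv.1 v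
    have e : ((Finset.univ.filter fun x => f x = x).erase (f^[m] v)).card = k := by
      rw [Finset.card_erase_of_mem (by simpa using hm)]
      have hk := hfv.2
      rw [Set.ncard_eq_toFinset_card'] at hk
      simp only [Set.toFinset_ofPred] at hk
      omega
    rw [← e]
    refine Finset.card_le_card_of_injOn (fun r => (f, v, r)) ?_ ?_
    · intro r hr
      simp only [Finset.coe_erase, Finset.coe_filter, Finset.mem_univ, true_and, Set.mem_sdiff,
        Set.mem_ofPred_eq, Set.mem_singleton_iff] at hr
      simp only [hP, Finset.coe_filter, Finset.mem_filter, Finset.mem_univ, true_and,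
        Set.mem_ofPred_eq, and_true]
      refine ⟨hfv, hr.1, fun j hj => hr.2 ?_⟩
      have h1 : f^[max j m] v = f^[m] v := iterate_fixed hm _ (le_max_right _ _)
      have h2 : f^[max j m] v = f^[j] v :=
        iterate_fixed (by rw [hj]; exact hr.1) _ (le_max_left _ _)
      rw [← h1, h2, hj]
    · intro a _ b _ h
      simpa using h
  exact hPc.trans (hPQ.trans hQc.le)

lemma forest_count (n j : ℕ) (hj : j ≤ n) :
    n.choose j * (n + 1) ^ j ≤ (forestMaps (n + 1) (n + 1 - j)).ncard := by
  induction j with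
  | zero =>
    simp only [Nat.choose_zero_right, pow_zero, mul_one, Nat.sub_zero]
    rw [Nat.succ_le_iff, Set.ncard_pos]
    refine ⟨id, fun x => ⟨0, rfl⟩, ?_⟩
    simp [Set.ncard_univ]
  | succ j ih =>
    have ih := ih (by omega)
    have hs := forest_step (n + 1) (n - j)
    have e1 : n - j + 1 = n + 1 - j := by omega
    have e2 : n + 1 - (n - j) = j + 1 := by omega
    have e3 : n + 1 - (j + 1) = n - j := by omega
    rw [e1, e2] at hs
    rw [e3]
    refine Nat.le_of_mul_le_mul_right (le_trans ?_ hs) (Nat.succ_pos j)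
    calc n.choose (j + 1) * (n + 1) ^ (j + 1) * (j + 1)
        = (n.choose (j + 1) * (j + 1)) * (n + 1) ^ (j + 1) := by ring
      _ = (n.choose j * (n + 1) ^ j) * ((n + 1) * (n - j)) := by
          rw [Nat.choose_succ_right_eq]; ring
      _ ≤ _ := Nat.mul_le_mul_right _ ih

lemma rooted_count (n : ℕ) : (n + 1) ^ n ≤ (forestMaps (n + 1) 1).ncard := by
  have := forest_count n n le_rfl
  simpa using this

/-! ### Trees and their parent maps -/

lemma exists_root {n : ℕ} {f : Fin n → Fin n} (hf : f ∈ forestMaps n 1) :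
    ∃ r, f r = r ∧ ∀ x, ∃ m, f^[m] x = r := by
  obtain ⟨h1, h2⟩ := hf
  obtain ⟨r, hr⟩ := Set.ncard_eq_one.mp h2
  have hr' : ∀ x, f x = x ↔ x = r := fun x => by
    have := Set.ext_iff.mp hr x
    simpa using this
  refine ⟨r, (hr' r).2 rfl, fun x => ?_⟩
  obtain ⟨m, hm⟩ := h1 x
  exact ⟨m, (hr' _).1 hm⟩

lemma mem_forestMaps_one {n : ℕ} {f : Fin n → Fin n} {r : Fin n} (hr : f r = r)
    (h : ∀ x, ∃ m, f^[m] x = r) : f ∈ forestMaps n 1 := by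
  refine ⟨fun x => ?_, ?_⟩
  · obtain ⟨m, hm⟩ := h x
    exact ⟨m, by rw [hm, hr]⟩
  · rw [Set.ncard_eq_one]
    refine ⟨r, ?_⟩
    ext x
    simp only [Set.mem_ofPred_eq, Set.mem_singleton_iff]
    refine ⟨fun hx => ?_, fun hx => by rw [hx, hr]⟩
    obtain ⟨m, hm⟩ := h x
    rw [← hm, Function.iterate_fixed hx]

/-- The graph joining each non-fixed vertex `x` to its parent `f x`. -/
def parentGraph {n : ℕ} (f : Fin n → Fin n) : SimpleGraph (Fin n) :=
  SimpleGraph.fromRel fun x y => f x = y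

lemma parentGraph_adj {n : ℕ} {f : Fin n → Fin n} {x y : Fin n} :
    (parentGraph f).Adj x y ↔ x ≠ y ∧ (f x = y ∨ f y = x) := by
  simp [parentGraph, SimpleGraph.fromRel_adj]

/-- If all orbits of `f` reach `r`, then a set containing `r` and closed under `f` induces a connected
subgraph. -/
lemma connected_induce {n : ℕ} {f : Fin n → Fin n} {r : Fin n}
    (h : ∀ x, ∃ m, f^[m] x = r) (S : Set (Fin n)) (hrS : r ∈ S) (hS : ∀ x ∈ S, f x ∈ S) :
    ((parentGraph f).induce S).Connected := by
  have key : ∀ (m : ℕ) (x : Fin n) (hx : x ∈ S), f^[m] x = r →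
      ((parentGraph f).induce S).Reachable ⟨x, hx⟩ ⟨r, hrS⟩ := by
    intro m
    induction m with
    | zero =>
      intro x hx h0
      have : x = r := h0
      subst this
      exact SimpleGraph.Reachable.refl _
    | succ m ih =>
      intro x hx h0
      have h1 := ih (f x) (hS x hx) h0
      by_cases hxf : x = f x
      · have e : (⟨x, hx⟩ : S) = ⟨f x, hS x hx⟩ := Subtype.ext hxf
        rw [e]; exact h1
      · refine SimpleGraph.Reachable.trans (SimpleGraph.Adj.reachable ?_) h1
        rw [SimpleGraph.induce_adj, parentGraph_adj]
        exact ⟨hxf, Or.inl rfl⟩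
  have : Nonempty S := ⟨⟨r, hrS⟩⟩
  refine SimpleGraph.Connected.mk fun x y => ?_
  obtain ⟨m, hm⟩ := h x
  obtain ⟨k, hk⟩ := h y
  exact (key m x x.2 hm).trans (key k y y.2 hk).symm

lemma parentGraph_isTree {n : ℕ} {f : Fin n → Fin n} (hf : f ∈ forestMaps n 1) :
    (parentGraph f).IsTree := by
  classical
  obtain ⟨r, hr, h⟩ := exists_root hf
  have hconn : (parentGraph f).Connected := by
    have := connected_induce h Set.univ (Set.mem_univ _) fun _ _ => Set.mem_univ _
    exact (SimpleGraph.induceUnivIso (parentGraph f)).connected_iff.mp this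
  rw [SimpleGraph.isTree_iff_connected_and_card]
  refine ⟨hconn, le_antisymm ?_ hconn.card_vert_le_card_edgeSet_add_one⟩
  have hsub : (parentGraph f).edgeSet ⊆
      (((Finset.univ.erase r).image fun x => s(x, f x) : Finset _) : Set (Sym2 (Fin n))) := by
    intro e
    induction e with
    | _ x y =>
      rw [SimpleGraph.mem_edgeSet, parentGraph_adj]
      rintro ⟨hne, h1 | h1⟩
      · simp only [Finset.coe_image, Set.mem_image]
        refine ⟨x, ?_, by rw [h1]⟩
        simp only [Finset.mem_coe, Finset.mem_erase, Finset.mem_univ, and_true]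
        rintro rfl; exact hne (by rw [← h1, hr])
      · simp only [Finset.coe_image, Set.mem_image]
        refine ⟨y, ?_, by rw [h1, Sym2.eq_swap]⟩
        simp only [Finset.mem_coe, Finset.mem_erase, Finset.mem_univ, and_true]
        rintro rfl; exact hne (by rw [← h1, hr])
  have h1 := Set.ncard_le_ncard hsub (Finset.finite_toSet _)
  rw [Set.ncard_coe_finset] at h1
  have h2 := h1.trans Finset.card_image_le
  rw [Finset.card_erase_of_mem (Finset.mem_univ _), Finset.card_univ, Fintype.card_fin] at h2
  have hn : 0 < n := r.pos
  rw [Nat.card_coe_set_eq, Nat.card_eq_fintype_card, Fintype.card_fin]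
  omega

/-- Orient each edge towards `r`: the parent of `x` is a neighbour closer to `r`. -/
lemma exists_parentMap {n : ℕ} {G : SimpleGraph (Fin n)} (hG : G.IsTree) (r : Fin n) :
    ∃ f ∈ forestMaps n 1, parentGraph f = G := by
  classical
  have step : ∀ x, ∃ y, (x = r → y = r) ∧
      (x ≠ r → G.Adj x y ∧ G.dist y r < G.dist x r) := by
    intro x
    by_cases hx : x = r
    · exact ⟨r, fun _ => rfl, fun h => absurd hx h⟩
    · obtain ⟨p, hp⟩ := hG.1.exists_walk_length_eq_dist x r
      cases p with
      | nil => exact absurd rfl hx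
      | @cons _ y _ hadj q =>
        refine ⟨y, fun h => absurd h hx, fun _ => ⟨hadj, ?_⟩⟩
        rw [← hp, SimpleGraph.Walk.length_cons]
        exact Nat.lt_succ_of_le (SimpleGraph.dist_le q)
  choose f hf1 hf2 using step
  have hreach : ∀ d x, G.dist x r ≤ d → ∃ m, f^[m] x = r := by
    intro d
    induction d with
    | zero =>
      intro x hx
      exact ⟨0, hG.1.dist_eq_zero_iff.mp (Nat.le_zero.mp hx)⟩
    | succ d ih =>
      intro x hx
      by_cases hxr : x = r
      · exact ⟨0, hxr⟩
      · obtain ⟨m, hm⟩ := ih (f x) (by have := (hf2 x hxr).2; omega)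
        exact ⟨m + 1, hm⟩
  have hfm : f ∈ forestMaps n 1 :=
    mem_forestMaps_one (hf1 r rfl) fun x => hreach _ x le_rfl
  refine ⟨f, hfm, ?_⟩
  have hle : parentGraph f ≤ G := by
    intro x y hxy
    rw [parentGraph_adj] at hxy
    obtain ⟨hne, h1 | h1⟩ := hxy
    · have hx : x ≠ r := fun h => hne (by rw [← h1, hf1 x h, h])
      exact h1 ▸ (hf2 x hx).1
    · have hy : y ≠ r := fun h => hne (by rw [← h1, hf1 y h, h])
      exact (h1 ▸ (hf2 y hy).1).symm
  have c1 := (SimpleGraph.isTree_iff_connected_and_card.mp (parentGraph_isTree hfm)).2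
  have c2 := (SimpleGraph.isTree_iff_connected_and_card.mp hG).2
  rw [← SimpleGraph.edgeSet_inj]
  refine Set.eq_of_subset_of_ncard_le (SimpleGraph.edgeSet_mono hle) ?_ (Set.toFinite _)
  rw [Nat.card_coe_set_eq] at c1 c2
  omega

/-- A tree and its root determine the parent map. -/
lemma parentMap_unique {n : ℕ} {f g : Fin n → Fin n} {r : Fin n} (hf : f ∈ forestMaps n 1)
    (hfr : f r = r) (hgr : g r = r) (h : parentGraph f = parentGraph g) : f = g := by
  obtain ⟨r', hr', hreach⟩ := exists_root hf
  obtain rfl : r = r' := by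
    obtain ⟨m, hm⟩ := hreach r
    rw [← hm, Function.iterate_fixed hfr]
  -- A disagreement of `f` and `g` at `x` propagates to `f x`, hence up to the root.
  have step : ∀ x, f x ≠ g x → f (f x) ≠ g (f x) := by
    intro x hx hfx
    by_cases hxx : f x = x
    · obtain ⟨m, hm⟩ := hreach x
      rw [Function.iterate_fixed hxx] at hm
      exact hx (by rw [hm, hfr, hgr])
    have hadj : (parentGraph g).Adj x (f x) := by
      rw [← h, parentGraph_adj]
      exact ⟨fun e => hxx e.symm, Or.inl rfl⟩
    rw [parentGraph_adj] at hadj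
    have h2 : g (f x) = x := hadj.2.resolve_left fun e => hx e.symm
    -- Then `x` lies on a 2-cycle of `f`.
    have h3 : f (f x) = x := by rw [hfx, h2]
    obtain ⟨m, hm⟩ := hf.1 x
    have h4 : ∀ k, f^[k] x = x ∨ f^[k] x = f x := by
      intro k
      induction k with
      | zero => exact Or.inl rfl
      | succ k ih =>
        rw [Function.iterate_succ_apply']
        rcases ih with e | e
        · exact Or.inr (by rw [e])
        · exact Or.inl (by rw [e, h3])
    rcases h4 m with e | e <;> rw [e] at hm
    · exact hxx hm
    · exact hxx (hm.symm.trans h3)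
  funext x
  by_contra hx
  have hall : ∀ k, f (f^[k] x) ≠ g (f^[k] x) := by
    intro k
    induction k with
    | zero => exact hx
    | succ k ih => rw [Function.iterate_succ_apply']; exact step _ ih
  obtain ⟨m, hm⟩ := hreach x
  exact hall m (by rw [hm, hfr, hgr])

lemma tree_count (n : ℕ) :
    (n + 1) ^ n ≤ Nat.card {G : SimpleGraph (Fin (n + 1)) // G.IsTree} * (n + 1) := by
  classical
  refine (rooted_count n).trans ?_
  rw [← Nat.card_coe_set_eq]
  have e : Nat.card ({G : SimpleGraph (Fin (n + 1)) // G.IsTree} × Fin (n + 1)) =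
      Nat.card {G : SimpleGraph (Fin (n + 1)) // G.IsTree} * (n + 1) := by simp
  rw [← e]
  refine Nat.card_le_card_of_injective (fun f : forestMaps (n + 1) 1 =>
    ((⟨parentGraph f.1, parentGraph_isTree f.2⟩, (exists_root f.2).choose) :
      {G : SimpleGraph (Fin (n + 1)) // G.IsTree} × Fin (n + 1))) ?_
  intro f g hfg
  simp only [Prod.mk.injEq, Subtype.mk.injEq] at hfg
  exact Subtype.ext (parentMap_unique f.2 (exists_root f.2).choose_spec.1
    (by rw [hfg.2]; exact (exists_root g.2).choose_spec.1) hfg.1)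

/-- A property of trees is no more frequent than a property of maps that it forces on all parent
maps. -/
lemma bad_trees_le {n : ℕ} (P : SimpleGraph (Fin (n + 1)) → Prop)
    (Q : (Fin (n + 1) → Fin (n + 1)) → Prop)
    (h : ∀ f ∈ forestMaps (n + 1) 1, P (parentGraph f) → Q f) :
    Nat.card {G : SimpleGraph (Fin (n + 1)) // G.IsTree ∧ P G} ≤ Nat.card {f // Q f} := by
  refine Nat.card_le_card_of_injective
    (fun G : {G : SimpleGraph (Fin (n + 1)) // G.IsTree ∧ P G} =>
      (⟨(exists_parentMap G.2.1 0).choose, h _ (exists_parentMap G.2.1 0).choose_spec.1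
        (by rw [(exists_parentMap G.2.1 0).choose_spec.2]; exact G.2.2)⟩ : {f // Q f})) ?_
  intro G H hGH
  simp only [Subtype.mk.injEq] at hGH
  apply Subtype.ext
  rw [← (exists_parentMap G.2.1 0).choose_spec.2, hGH, (exists_parentMap H.2.1 0).choose_spec.2]

/-! ### Pendant paths -/

/-- `x` has no children. -/
def IsLeaf {n : ℕ} (f : Fin n → Fin n) (x : Fin n) : Prop := ∀ y, f y ≠ x

/-- `x` is a leaf and the only child of its parent. -/
def IsChainTwo {n : ℕ} (f : Fin n → Fin n) (x : Fin n) : Prop :=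
  IsLeaf f x ∧ ∀ y, f y = f x → y = x

/-- `x` is a leaf, the only child of its parent `f x`, which is the only child of `f (f x)`. -/
def IsChainThree {n : ℕ} (f : Fin n → Fin n) (x : Fin n) : Prop :=
  IsChainTwo f x ∧ ∀ y, f y = f (f x) → y = f x

open Classical in
/-- Number of vertices, at most three, of the pendant path starting at the leaf `x`; zero if `x` is not
a leaf. -/
noncomputable def chainLength {n : ℕ} (f : Fin n → Fin n) (x : Fin n) : ℕ :=
  if IsChainThree f x then 3 else if IsChainTwo f x then 2 else if IsLeaf f x then 1 else 0

/-- Logarithm of the number of ways to shorten all pendant paths from their leaf ends. -/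
noncomputable def chainWeight {n : ℕ} (f : Fin n → Fin n) : ℝ :=
  ∑ x, Real.log (1 + chainLength f x)

lemma one_le_chainLength {n : ℕ} {f : Fin n → Fin n} {x : Fin n} :
    1 ≤ chainLength f x ↔ IsLeaf f x := by
  unfold chainLength
  have h1 : IsChainThree f x → IsChainTwo f x := fun h => h.1
  have h2 : IsChainTwo f x → IsLeaf f x := fun h => h.1
  split_ifs <;> simp <;> tauto

lemma two_le_chainLength {n : ℕ} {f : Fin n → Fin n} {x : Fin n} :
    2 ≤ chainLength f x ↔ IsChainTwo f x := by
  unfold chainLength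
  have h1 : IsChainThree f x → IsChainTwo f x := fun h => h.1
  have h2 : IsChainTwo f x → IsLeaf f x := fun h => h.1
  split_ifs <;> simp <;> tauto

lemma three_le_chainLength {n : ℕ} {f : Fin n → Fin n} {x : Fin n} :
    3 ≤ chainLength f x ↔ IsChainThree f x := by
  unfold chainLength
  split_ifs <;> simp <;> tauto

lemma chainLength_le {n : ℕ} (f : Fin n → Fin n) (x : Fin n) : chainLength f x ≤ 3 := by
  unfold chainLength
  split_ifs <;> simp

/-- The vertices left after deleting, for each `x`, the first `c x` of `x, f x, f (f x)`. -/
def trimmed {n : ℕ} (f : Fin n → Fin n) (c : Fin n → ℕ) : Set (Fin n) :=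
  {y | ∀ x, (y = x → c x < 1) ∧ (y = f x → c x < 2) ∧ (y = f (f x) → c x < 3)}

lemma prod_le_subtreeCount {n : ℕ} {f : Fin n → Fin n} (hf : f ∈ forestMaps n 1) :
    ∏ x, (1 + chainLength f x) ≤ subtreeCount (parentGraph f) := by
  classical
  obtain ⟨r, hr, hreach⟩ := exists_root hf
  set D : Finset (Fin n → ℕ) := Fintype.piFinset fun x => Finset.range (1 + chainLength f x)
  have hcard : D.card = ∏ x, (1 + chainLength f x) := by
    simp [D, Fintype.card_piFinset]
  have hle : ∀ c ∈ D, ∀ x, c x ≤ chainLength f x := by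
    intro c hc x
    have := Fintype.mem_piFinset.mp hc x
    rw [Finset.mem_range] at this
    omega
  have t1 : ∀ c ∈ D, ∀ x, 1 ≤ c x → IsLeaf f x := fun c hc x h =>
    one_le_chainLength.1 (h.trans (hle c hc x))
  have t2 : ∀ c ∈ D, ∀ x, 2 ≤ c x → IsChainTwo f x := fun c hc x h =>
    two_le_chainLength.1 (h.trans (hle c hc x))
  have t3 : ∀ c ∈ D, ∀ x, 3 ≤ c x → IsChainThree f x := fun c hc x h =>
    three_le_chainLength.1 (h.trans (hle c hc x))
  have hconn : ∀ c ∈ D, ((parentGraph f).induce (trimmed f c)).Connected := by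
    intro c hc
    refine connected_induce hreach _ ?_ ?_
    · intro x
      refine ⟨fun h => ?_, fun h => ?_, fun h => ?_⟩ <;> by_contra hcx <;> rw [not_lt] at hcx
      · exact t1 c hc x hcx r (by rw [hr, h])
      · have h2 := t2 c hc x hcx
        have e := h2.2 r (by rw [hr, h])
        exact h2.1 r (by rw [hr, e])
      · have h3 := t3 c hc x hcx
        have e := h3.2 r (by rw [hr, h])
        have e' := h3.1.2 r (by rw [hr, e])
        exact h3.1.1 r (by rw [hr, e'])
    · intro y hy x
      refine ⟨fun h => ?_, fun h => ?_, fun h => ?_⟩ <;> by_contra hcx <;> rw [not_lt] at hcx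
      · exact t1 c hc x hcx y h
      · have e := (t2 c hc x hcx).2 y h
        have := (hy x).1 e
        omega
      · have e := (t3 c hc x hcx).2 y h
        have := (hy x).2.1 e
        omega
  -- The three membership tests below recover `c` from `trimmed f c`.
  have r1 : ∀ c ∈ D, ∀ x, IsLeaf f x → (x ∈ trimmed f c ↔ c x < 1) := by
    intro c hc x hx
    refine ⟨fun h => (h x).1 rfl, fun h y => ⟨?_, ?_, ?_⟩⟩
    · rintro rfl; exact h
    · intro e; exact absurd e.symm (hx y)
    · intro e; exact absurd e.symm (hx (f y))
  have r2 : ∀ c ∈ D, ∀ x, IsChainTwo f x → (f x ∈ trimmed f c ↔ c x < 2) := by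
    intro c hc x hx
    refine ⟨fun h => (h x).2.1 rfl, fun h y => ⟨?_, ?_, ?_⟩⟩
    · intro e
      by_contra hcy
      exact t1 c hc y (by omega) x e
    · intro e
      rw [hx.2 y e.symm]; exact h
    · intro e
      exact absurd (hx.2 (f y) e.symm) (hx.1 y)
  have r3 : ∀ c ∈ D, ∀ x, IsChainThree f x → (f (f x) ∈ trimmed f c ↔ c x < 3) := by
    intro c hc x hx
    refine ⟨fun h => (h x).2.2 rfl, fun h y => ⟨?_, ?_, ?_⟩⟩
    · intro e
      by_contra hcy
      exact t1 c hc y (by omega) (f x) e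
    · intro e
      by_contra hcy
      exact t1 c hc y (by omega) x (hx.2 y e.symm).symm
    · intro e
      rw [hx.1.2 y (hx.2 (f y) e.symm)]; exact h
  rw [← hcard, ← Fintype.card_coe, ← Nat.card_eq_fintype_card]
  refine Nat.card_le_card_of_injective
    (fun c : D => (⟨trimmed f c.1, hconn c.1 c.2⟩ :
      {S : Set (Fin n) // ((parentGraph f).induce S).Connected})) ?_
  rintro ⟨c, hc⟩ ⟨c', hc'⟩ h
  simp only [Subtype.mk.injEq] at h ⊢
  funext x
  have b := hle c hc x
  have b' := hle c' hc' x
  have q3 := chainLength_le f x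
  have q : c x < chainLength f x + 1 := by omega
  have s1 : 1 ≤ chainLength f x → (c x < 1 ↔ c' x < 1) := fun hx => by
    have hx := one_le_chainLength.1 hx
    rw [← r1 c hc x hx, ← r1 c' hc' x hx, h]
  have s2 : 2 ≤ chainLength f x → (c x < 2 ↔ c' x < 2) := fun hx => by
    have hx := two_le_chainLength.1 hx
    rw [← r2 c hc x hx, ← r2 c' hc' x hx, h]
  have s3 : 3 ≤ chainLength f x → (c x < 3 ↔ c' x < 3) := fun hx => by
    have hx := three_le_chainLength.1 hx
    rw [← r3 c hc x hx, ← r3 c' hc' x hx, h]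
  interval_cases chainLength f x <;> omega

lemma exp_chainWeight_le {n : ℕ} {f : Fin n → Fin n} (hf : f ∈ forestMaps n 1) :
    Real.exp (chainWeight f) ≤ subtreeCount (parentGraph f) := by
  have h : Real.exp (chainWeight f) = ((∏ x, (1 + chainLength f x) : ℕ) : ℝ) := by
    rw [chainWeight, Real.exp_sum]
    push_cast
    exact Finset.prod_congr rfl fun x _ => Real.exp_log (by positivity)
  rw [h]
  exact_mod_cast prod_le_subtreeCount hf

lemma chainWeight_eq {n : ℕ} (f : Fin n → Fin n) :
    chainWeight f = Real.log 2 * {x | IsLeaf f x}.ncard +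
      Real.log (3 / 2) * {x | IsChainTwo f x}.ncard +
      Real.log (4 / 3) * {x | IsChainThree f x}.ncard := by
  classical
  have e : ∀ P : Fin n → Prop, (({x | P x}.ncard : ℕ) : ℝ) = ∑ x, if P x then (1 : ℝ) else 0 := by
    intro P
    rw [Set.ncard_eq_toFinset_card', Set.toFinset_ofPred]
    simp
  rw [e, e, e, Finset.mul_sum, Finset.mul_sum, Finset.mul_sum, ← Finset.sum_add_distrib,
    ← Finset.sum_add_distrib, chainWeight]
  refine Finset.sum_congr rfl fun x _ => ?_
  have h1 : IsChainThree f x → IsChainTwo f x := fun h => h.1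
  have h2 : IsChainTwo f x → IsLeaf f x := fun h => h.1
  have l3 : Real.log 3 = Real.log 2 + Real.log (3 / 2) := by
    rw [← Real.log_mul (by norm_num) (by norm_num)]; norm_num
  have l4 : Real.log 4 = Real.log 3 + Real.log (4 / 3) := by
    rw [← Real.log_mul (by norm_num) (by norm_num)]; norm_num
  unfold chainLength
  split_ifs <;> first | tauto | (norm_num; try linarith)

/-! ### Changing one value of the map -/

lemma ncard_le_add {n : ℕ} {A B Z : Set (Fin n)} (k : ℕ) (h : A ⊆ B ∪ Z) (hZ : Z.ncard ≤ k) :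
    (A.ncard : ℝ) ≤ B.ncard + k := by
  have h1 := Set.ncard_le_ncard h (Set.toFinite _)
  have h2 := Set.ncard_union_le B Z
  exact_mod_cast h1.trans (h2.trans (by omega))

lemma ncard_preimage_le {n : ℕ} {f : Fin n → Fin n} {A : Set (Fin n)} (hA : Set.InjOn f A)
    (Z : Set (Fin n)) : (A ∩ f ⁻¹' Z).ncard ≤ Z.ncard :=
  Set.ncard_le_ncard_of_injOn f (fun _ h => h.2) (hA.mono Set.inter_subset_left) (Set.toFinite _)

lemma ncard_three_le {n : ℕ} (a b c : Fin n) : ({a, b, c} : Set (Fin n)).ncard ≤ 3 := by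
  have h1 := Set.ncard_insert_le a ({b, c} : Set (Fin n))
  have h2 := Set.ncard_insert_le b ({c} : Set (Fin n))
  rw [Set.ncard_singleton] at h2
  omega

lemma chainTwo_injOn {n : ℕ} (f : Fin n → Fin n) : Set.InjOn f {x | IsChainTwo f x} :=
  fun _ _ _ hb h => hb.2 _ h

lemma chainThree_injOn {n : ℕ} (f : Fin n → Fin n) :
    Set.InjOn (fun x => f (f x)) {x | IsChainThree f x} :=
  fun _ _ _ hb h => hb.1.2 _ (hb.2 _ h)

/-- If `f` and `g` differ only at `i`, then a pendant path of `f` avoiding the at most three vertices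
`i`, `f i`, `g i` is a pendant path of `g`. Pendant paths starting at different leaves are disjoint,
so each of these vertices spoils at most one path in each position. -/
lemma chain_counts_le {n : ℕ} (f g : Fin n → Fin n) (i : Fin n) (h : ∀ x, x ≠ i → f x = g x) :
    ({x | IsLeaf f x}.ncard : ℝ) ≤ {x | IsLeaf g x}.ncard + 3 ∧
    ({x | IsChainTwo f x}.ncard : ℝ) ≤ {x | IsChainTwo g x}.ncard + 6 ∧
    ({x | IsChainThree f x}.ncard : ℝ) ≤ {x | IsChainThree g x}.ncard + 9 := by
  set Z : Set (Fin n) := {i, f i, g i} with hZ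
  have hZ3 : Z.ncard ≤ 3 := ncard_three_le _ _ _
  -- Outside `Z` the maps `f` and `g` have the same values and the same fibres.
  have hval : ∀ x, x ∉ Z → f x = g x := fun x hx => h x fun e => hx (by simp [hZ, e])
  have hfib : ∀ x, x ∉ Z → ∀ y, g y = x → f y = x := by
    intro x hx y hy
    by_cases hyi : y = i
    · exact absurd (by simp [hZ, ← hy, hyi]) hx
    · rw [h y hyi, hy]
  have p1 : ∀ x, IsLeaf f x → x ∉ Z → IsLeaf g x := fun x hx hxZ y hy =>
    hx y (hfib x hxZ y hy)
  have p2 : ∀ x, IsChainTwo f x → x ∉ Z → f x ∉ Z → IsChainTwo g x := by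
    intro x hx hxZ hfZ
    refine ⟨p1 x hx.1 hxZ, fun y hy => hx.2 y (hfib _ hfZ y ?_)⟩
    rw [hy, hval x hxZ]
  have p3 : ∀ x, IsChainThree f x → x ∉ Z → f x ∉ Z → f (f x) ∉ Z → IsChainThree g x := by
    intro x hx hxZ hfZ hffZ
    refine ⟨p2 x hx.1 hxZ hfZ, fun y hy => ?_⟩
    rw [← hval x hxZ] at hy ⊢
    exact hx.2 y (hfib _ hffZ y (by rw [hy, hval _ hfZ]))
  refine ⟨?_, ?_, ?_⟩
  · refine ncard_le_add 3 (Z := Z) (fun x hx => ?_) hZ3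
    by_cases hxZ : x ∈ Z
    · exact Or.inr hxZ
    · exact Or.inl (p1 x hx hxZ)
  · refine ncard_le_add 6 (Z := Z ∪ ({x | IsChainTwo f x} ∩ f ⁻¹' Z)) (fun x hx => ?_) ?_
    · by_cases hxZ : x ∈ Z
      · exact Or.inr (Or.inl hxZ)
      by_cases hfZ : f x ∈ Z
      · exact Or.inr (Or.inr ⟨hx, hfZ⟩)
      exact Or.inl (p2 x hx hxZ hfZ)
    · have a := Set.ncard_union_le Z ({x | IsChainTwo f x} ∩ f ⁻¹' Z)
      have b := ncard_preimage_le (chainTwo_injOn f) Z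
      omega
  · refine ncard_le_add 9 (Z := Z ∪ ({x | IsChainTwo f x} ∩ f ⁻¹' Z) ∪
      ({x | IsChainThree f x} ∩ (fun x => f (f x)) ⁻¹' Z)) (fun x hx => ?_) ?_
    · by_cases hxZ : x ∈ Z
      · exact Or.inr (Or.inl (Or.inl hxZ))
      by_cases hfZ : f x ∈ Z
      · exact Or.inr (Or.inl (Or.inr ⟨hx.1, hfZ⟩))
      by_cases hffZ : f (f x) ∈ Z
      · exact Or.inr (Or.inr ⟨hx, hffZ⟩)
      exact Or.inl (p3 x hx hxZ hfZ hffZ)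
    · have a := Set.ncard_union_le Z ({x | IsChainTwo f x} ∩ f ⁻¹' Z)
      have a' := Set.ncard_union_le (Z ∪ ({x | IsChainTwo f x} ∩ f ⁻¹' Z))
        ({x | IsChainThree f x} ∩ (fun x => f (f x)) ⁻¹' Z)
      have b := ncard_preimage_le (chainTwo_injOn f) Z
      have b' := ncard_preimage_le (chainThree_injOn f) Z
      omega

lemma chainWeight_le_add {n : ℕ} (f g : Fin n → Fin n) (i : Fin n)
    (h : ∀ x, x ≠ i → f x = g x) : chainWeight f ≤ chainWeight g + 18 := by
  obtain ⟨h1, h2, h3⟩ := chain_counts_le f g i h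
  have l2 : Real.log 2 ≤ 1 := by linarith [Real.log_two_lt_d9]
  have l3 : Real.log (3 / 2) ≤ 1 := by
    linarith [Real.log_le_sub_one_of_pos (show (0 : ℝ) < 3 / 2 by norm_num)]
  have l4 : Real.log (4 / 3) ≤ 1 := by
    linarith [Real.log_le_sub_one_of_pos (show (0 : ℝ) < 4 / 3 by norm_num)]
  have q2 : 0 ≤ Real.log 2 := Real.log_nonneg (by norm_num)
  have q3 : 0 ≤ Real.log (3 / 2) := Real.log_nonneg (by norm_num)
  have q4 : 0 ≤ Real.log (4 / 3) := Real.log_nonneg (by norm_num)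
  rw [chainWeight_eq, chainWeight_eq]
  have m1 := mul_le_mul_of_nonneg_left h1 q2
  have m2 := mul_le_mul_of_nonneg_left h2 q3
  have m3 := mul_le_mul_of_nonneg_left h3 q4
  linarith

lemma chainWeight_update {n : ℕ} (f : Fin n → Fin n) (i a : Fin n) :
    |chainWeight (Function.update f i a) - chainWeight f| ≤ 18 := by
  have h : ∀ x, x ≠ i → Function.update f i a x = f x := fun x hx => Function.update_of_ne hx _ _
  rw [abs_le]
  constructor
  · linarith [chainWeight_le_add f (Function.update f i a) i fun x hx => (h x hx).symm]
  · linarith [chainWeight_le_add (Function.update f i a) f i h]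

/-! ### The mean over all maps -/

/-- If `S` contains the sets `A p`, which lie in different fibres of `φ` and have at least `k` elements
each, then `S` has at least `T.card * k` elements. -/
lemma le_ncard_of_fibres {ι β : Type*} [Finite β] [DecidableEq ι] (S : Set β) (φ : β → ι)
    (T : Finset ι) (A : ι → Finset β) (k : ℕ) (hA : ∀ p ∈ T, k ≤ (A p).card)
    (hS : ∀ p ∈ T, ∀ b ∈ A p, b ∈ S ∧ φ b = p) : T.card * k ≤ S.ncard := by
  classical
  have hd : ((T : Set ι)).PairwiseDisjoint A := by
    intro p hp q hq hpq
    rw [Function.onFun, Finset.disjoint_left]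
    intro b hb hb'
    exact hpq (((hS p hp b hb).2).symm.trans (hS q hq b hb').2)
  calc T.card * k ≤ ∑ p ∈ T, (A p).card := by
        rw [← smul_eq_mul]; exact Finset.card_nsmul_le_sum _ _ _ hA
    _ = (T.biUnion A).card := (Finset.card_biUnion fun p hp q hq h => hd hp hq h).symm
    _ = ((T.biUnion A : Finset β) : Set β).ncard := (Set.ncard_coe_finset _).symm
    _ ≤ S.ncard := by
        refine Set.ncard_le_ncard (fun b hb => ?_) (Set.toFinite _)
        simp only [Finset.coe_biUnion, Set.mem_iUnion, Finset.mem_coe] at hb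
        obtain ⟨p, hp, hb⟩ := hb
        exact (hS p hp b hb).1

lemma leaf_maps {n : ℕ} (x : Fin n) : (n - 1) ^ n ≤ {f : Fin n → Fin n | IsLeaf f x}.ncard := by
  have := le_ncard_of_fibres {f : Fin n → Fin n | IsLeaf f x} (fun _ => ()) {()}
    (fun _ => Fintype.piFinset fun _ => {x}ᶜ) ((n - 1) ^ n)
    (by intro p _; simp [Fintype.card_piFinset, Finset.card_compl])
    (by
      intro p _ f hf
      simp only [Fintype.mem_piFinset, Finset.mem_compl, Finset.mem_singleton] at hf
      exact ⟨hf, rfl⟩)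
  simpa using this

/-- For each possible parent `v ≠ x` exactly `(n - 2) ^ (n - 1)` maps qualify. -/
lemma chainTwo_maps {n : ℕ} (x : Fin n) :
    (n - 2) ^ n ≤ {f : Fin n → Fin n | IsChainTwo f x}.ncard := by
  have hn : 0 < n := x.pos
  have := le_ncard_of_fibres {f : Fin n → Fin n | IsChainTwo f x} (fun f => f x)
    (Finset.univ.erase x)
    (fun v => Fintype.piFinset fun y => if y = x then {v} else {x, v}ᶜ) ((n - 2) ^ (n - 1))
    (by
      intro v hv
      have hxv : x ≠ v := (Finset.ne_of_mem_erase hv).symm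
      rw [Fintype.card_piFinset, ← Finset.mul_prod_erase _ _ (Finset.mem_univ x)]
      rw [Finset.prod_congr rfl (g := fun _ => n - 2) (by
        intro y hy
        rw [if_neg (Finset.ne_of_mem_erase hy), Finset.card_compl, Finset.card_pair hxv,
          Fintype.card_fin])]
      simp)
    (by
      intro v hv f hf
      have hxv : v ≠ x := Finset.ne_of_mem_erase hv
      rw [Fintype.mem_piFinset] at hf
      have hx : f x = v := by simpa using hf x
      have ho : ∀ y, y ≠ x → f y ≠ x ∧ f y ≠ v := by
        intro y hy
        have := hf y
        simpa [hy] using this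
      refine ⟨⟨fun y hy => ?_, fun y hy => ?_⟩, hx⟩
      · by_cases hyx : y = x
        · exact hxv (by rw [← hx, ← hyx, hy, hyx])
        · exact (ho y hyx).1 hy
      · by_contra hyx
        exact (ho y hyx).2 (by rw [hy, hx]))
  refine le_trans ?_ this
  rw [Finset.card_erase_of_mem (Finset.mem_univ _), Finset.card_univ, Fintype.card_fin]
  obtain ⟨m, rfl⟩ := Nat.exists_eq_succ_of_ne_zero hn.ne'
  rw [Nat.succ_eq_add_one, Nat.add_sub_cancel, pow_succ, mul_comm]
  exact Nat.mul_le_mul_right _ (by omega)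

/-- For each choice of `f x = v` and `f v = w` with `x`, `v`, `w` distinct, exactly
`(n - 3) ^ (n - 2)` maps qualify. -/
lemma chainThree_maps {n : ℕ} (hn : 3 ≤ n) (x : Fin n) :
    (n - 3) ^ n ≤ {f : Fin n → Fin n | IsChainThree f x}.ncard := by
  have := le_ncard_of_fibres {f : Fin n → Fin n | IsChainThree f x} (fun f => (f x, f (f x)))
    (Finset.univ.erase x).offDiag
    (fun p => Fintype.piFinset fun y =>
      if y = x then {p.1} else if y = p.1 then {p.2} else {x, p.1, p.2}ᶜ) ((n - 3) ^ (n - 2))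
    (by
      rintro ⟨v, w⟩ hp
      simp only [Finset.mem_offDiag, Finset.mem_erase, Finset.mem_univ, and_true] at hp
      obtain ⟨hv, hw, hvw⟩ := hp
      rw [Fintype.card_piFinset, ← Finset.mul_prod_erase _ _ (Finset.mem_univ x),
        ← Finset.mul_prod_erase _ _ (show v ∈ Finset.univ.erase x by simp [hv])]
      rw [Finset.prod_congr rfl (g := fun _ => n - 3) (by
        intro y hy
        simp only [Finset.mem_erase, Finset.mem_univ, and_true] at hy
        rw [if_neg hy.2, if_neg hy.1, Finset.card_compl,
          Finset.card_eq_three.mpr ⟨x, v, w, hv.symm, hw.symm, hvw, rfl⟩, Fintype.card_fin])]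
      rw [Finset.prod_const, Finset.card_erase_of_mem (by simp [hv]),
        Finset.card_erase_of_mem (Finset.mem_univ _), Finset.card_univ, Fintype.card_fin]
      simp [hv, Nat.sub_sub])
    (by
      rintro ⟨v, w⟩ hp f hf
      simp only [Finset.mem_offDiag, Finset.mem_erase, Finset.mem_univ, and_true] at hp
      obtain ⟨hv, hw, hvw⟩ := hp
      rw [Fintype.mem_piFinset] at hf
      have hx : f x = v := by simpa using hf x
      have hfv : f v = w := by simpa [hv] using hf v
      have ho : ∀ y, y ≠ x → y ≠ v → f y ≠ x ∧ f y ≠ v ∧ f y ≠ w := by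
        intro y hy hy'
        have := hf y
        simpa [hy, hy'] using this
      refine ⟨⟨⟨fun y hy => ?_, fun y hy => ?_⟩, fun y hy => ?_⟩, by simp [hx, hfv]⟩
      · by_cases hyx : y = x
        · exact hv (by rw [← hx, ← hyx, hy, hyx])
        · by_cases hyv : y = v
          · exact hw (by rw [← hfv, ← hyv, hy])
          · exact (ho y hyx hyv).1 hy
      · by_contra hyx
        rw [hx] at hy
        by_cases hyv : y = v
        · exact hvw (by rw [← hfv, ← hyv, hy, hyv])
        · exact (ho y hyx hyv).2.1 hy
      · rw [hx, hfv] at hy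
        rw [hx]
        by_contra hyv
        by_cases hyx : y = x
        · exact hvw (by rw [← hx, ← hyx, hy])
        · exact (ho y hyx hyv).2.2 hy)
  refine le_trans ?_ this
  rw [Finset.offDiag_card, Finset.card_erase_of_mem (Finset.mem_univ _), Finset.card_univ,
    Fintype.card_fin]
  obtain ⟨m, rfl⟩ := Nat.exists_eq_add_of_le hn
  have e1 : 3 + m - 3 = m := by omega
  have e2 : 3 + m - 2 = m + 1 := by omega
  have e3 : 3 + m - 1 = m + 2 := by omega
  rw [e1, e2, e3, show 3 + m = 2 + (m + 1) by omega, pow_add]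
  refine Nat.mul_le_mul_right _ ?_
  refine Nat.le_sub_of_add_le ?_
  nlinarith

lemma sum_ncard_ge {n : ℕ} (P : (Fin n → Fin n) → Fin n → Prop) (k : ℕ)
    (h : ∀ x, k ≤ {f | P f x}.ncard) : (n * k : ℝ) ≤ ∑ f, ({x | P f x}.ncard : ℝ) := by
  classical
  have e : ∑ f, {x | P f x}.ncard = ∑ x, {f | P f x}.ncard := by
    simp only [Set.ncard_eq_toFinset_card', Set.toFinset_ofPred, Finset.card_filter]
    exact Finset.sum_comm
  have : n * k ≤ ∑ f, {x | P f x}.ncard := by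
    rw [e]
    have := Finset.card_nsmul_le_sum Finset.univ (fun x => {f | P f x}.ncard) k fun x _ => h x
    simpa using this
  exact_mod_cast this

lemma pow_ratio (k : ℕ) (b : ℝ) (hb : b < Real.exp (-(k : ℝ))) :
    ∀ᶠ n : ℕ in atTop, b * (n : ℝ) ^ n ≤ ((n - k : ℕ) ^ n : ℕ) := by
  have h := Real.tendsto_one_add_div_pow_exp (-(k : ℝ))
  filter_upwards [h.eventually (lt_mem_nhds hb), eventually_ge_atTop (k + 1)] with n hn hk
  have hn0 : (0 : ℝ) < n := by exact_mod_cast (by omega : 0 < n)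
  push_cast [Nat.cast_sub (show k ≤ n by omega)]
  calc b * (n : ℝ) ^ n ≤ (1 + -(k : ℝ) / n) ^ n * (n : ℝ) ^ n := by gcongr
    _ = _ := by rw [← mul_pow]; congr 1; field_simp; ring

set_option exponentiation.threshold 2000 in
/-- The right side is the limit of the mean of `chainWeight / n`, with `e⁻¹`, `e⁻²`, `e⁻³` rounded down
to three decimals. -/
lemma log_bound : Real.log 1.37135 <
    Real.log 2 * 0.367 + Real.log (3 / 2) * 0.135 + Real.log (4 / 3) * 0.049 := by
  have h : (1.37135 : ℝ) ^ 1000 < 2 ^ 367 * (3 / 2) ^ 135 * (4 / 3) ^ 49 := by norm_num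
  have h1 := Real.log_lt_log (by positivity) h
  rw [Real.log_mul (by positivity) (by positivity), Real.log_mul (by positivity) (by positivity),
    Real.log_pow, Real.log_pow, Real.log_pow, Real.log_pow] at h1
  push_cast at h1
  linarith

lemma exp_neg_bounds : (0.367 : ℝ) < Real.exp (-(1 : ℕ)) ∧ (0.135 : ℝ) < Real.exp (-(2 : ℕ)) ∧
    (0.049 : ℝ) < Real.exp (-(3 : ℕ)) := by
  have h := Real.exp_one_lt_d9
  have hp := Real.exp_pos 1
  have e : ∀ k : ℕ, Real.exp (-(k : ℝ)) = (Real.exp 1 ^ k)⁻¹ := by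
    intro k; rw [Real.exp_neg, ← Real.exp_nat_mul, mul_one]
  have key : ∀ (k : ℕ) (b : ℝ), 0 < b → b * 2.7182818286 ^ k < 1 → b < Real.exp (-(k : ℝ)) := by
    intro k b hb hk
    rw [e, lt_inv_comm₀ hb (by positivity), lt_inv_comm₀ (by positivity) hb]
    rw [lt_inv_comm₀ hb (by positivity)]
    calc Real.exp 1 ^ k ≤ 2.7182818286 ^ k := by gcongr
      _ < b⁻¹ := by rw [← one_div, lt_div_iff₀ hb]; linarith
  exact ⟨key 1 _ (by norm_num) (by norm_num), key 2 _ (by norm_num) (by norm_num),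
    key 3 _ (by norm_num) (by norm_num)⟩

lemma mean_chainWeight : ∃ δ : ℝ, 0 < δ ∧ ∀ᶠ n : ℕ in atTop,
    (Real.log 1.37135 + δ) * n * (n : ℝ) ^ n ≤ ∑ f : Fin n → Fin n, chainWeight f := by
  obtain ⟨b1, b2, b3⟩ := exp_neg_bounds
  refine ⟨_, sub_pos.mpr log_bound, ?_⟩
  filter_upwards [pow_ratio 1 _ b1, pow_ratio 2 _ b2, pow_ratio 3 _ b3, eventually_ge_atTop 3]
    with n h1 h2 h3 hn
  have s1 := sum_ncard_ge (n := n) IsLeaf _ leaf_maps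
  have s2 := sum_ncard_ge (n := n) IsChainTwo _ chainTwo_maps
  have s3 := sum_ncard_ge (n := n) IsChainThree _ (chainThree_maps hn)
  have q2 : 0 ≤ Real.log 2 := Real.log_nonneg (by norm_num)
  have q3 : 0 ≤ Real.log (3 / 2) := Real.log_nonneg (by norm_num)
  have q4 : 0 ≤ Real.log (4 / 3) := Real.log_nonneg (by norm_num)
  have hn0 : (0 : ℝ) ≤ n := by positivity
  have m1 := mul_le_mul_of_nonneg_left ((mul_le_mul_of_nonneg_left h1 hn0).trans s1) q2
  have m2 := mul_le_mul_of_nonneg_left ((mul_le_mul_of_nonneg_left h2 hn0).trans s2) q3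
  have m3 := mul_le_mul_of_nonneg_left ((mul_le_mul_of_nonneg_left h3 hn0).trans s3) q4
  simp only [chainWeight_eq, Finset.sum_add_distrib, ← Finset.mul_sum]
  refine le_trans (le_of_eq ?_) (add_le_add (add_le_add m1 m2) m3)
  ring

/-! ### Conclusion -/

lemma treeProb_ge {δ : ℝ} (hδ : 0 < δ) (n : ℕ)
    (hmean : (Real.log 1.37135 + δ) * (n + 1 : ℕ) * ((n + 1 : ℕ) : ℝ) ^ (n + 1) ≤
      ∑ f : Fin (n + 1) → Fin (n + 1), chainWeight f) :
    1 - ((n + 1 : ℕ) : ℝ) ^ 2 * Real.exp (-(δ ^ 2 / (2 * 18 ^ 2)) * (n + 1 : ℕ)) ≤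
      treeProb (n + 1) (fun G => (1.37135 : ℝ) ^ (n + 1) ≤ (subtreeCount G : ℝ)) := by
  classical
  have htail := mcdiarmid_tail (n + 1) (chainWeight (n := n + 1)) 18 δ (Real.log 1.37135)
    (by norm_num) hδ chainWeight_update (by rw [Fintype.card_fin]; exact hmean)
  rw [Fintype.card_fin] at htail
  have hbad := bad_trees_le (n := n)
    (fun G => ¬ (1.37135 : ℝ) ^ (n + 1) ≤ (subtreeCount G : ℝ))
    (fun f => chainWeight f < Real.log 1.37135 * (n + 1 : ℕ)) (by
      intro f hf h
      contrapose! h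
      refine le_trans ?_ (exp_chainWeight_le hf)
      rw [← Real.exp_le_exp, mul_comm, Real.exp_nat_mul, Real.exp_log (by norm_num)] at h
      exact h)
  have hcount := tree_count n
  set N : ℝ := ((n + 1 : ℕ) : ℝ) with hN
  have hN0 : 0 < N := by positivity
  set B := Nat.card {G : SimpleGraph (Fin (n + 1)) //
    G.IsTree ∧ ¬ (1.37135 : ℝ) ^ (n + 1) ≤ (subtreeCount G : ℝ)} with hB
  set A := Nat.card {G : SimpleGraph (Fin (n + 1)) //
    G.IsTree ∧ (1.37135 : ℝ) ^ (n + 1) ≤ (subtreeCount G : ℝ)} with hA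
  set T := Nat.card {G : SimpleGraph (Fin (n + 1)) // G.IsTree} with hT
  have hsum : A + B = T := by
    simp only [hA, hB, hT, Nat.card_eq_fintype_card, Fintype.card_subtype]
    rw [← Finset.filter_filter, ← Finset.filter_filter]
    exact Finset.card_filter_add_card_filter_not _
  have hT1 : N ^ n ≤ T * N := by rw [hN]; exact_mod_cast hcount
  have hT0 : (0 : ℝ) < T := by
    have : 0 < T * N := (pow_pos hN0 n).trans_le hT1
    exact pos_of_mul_pos_left this hN0.le
  have hBle : (B : ℝ) ≤ N ^ (n + 1) * Real.exp (-(N * (δ ^ 2 / (2 * 18 ^ 2)))) :=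
    le_trans (by exact_mod_cast hbad) htail
  have hAr : (A : ℝ) = T - B := by rw [← hsum]; push_cast; ring
  change _ ≤ (A : ℝ) / T
  rw [hAr, sub_div, div_self hT0.ne']
  refine sub_le_sub_left ?_ _
  rw [div_le_iff₀ hT0]
  refine hBle.trans ?_
  rw [show -(δ ^ 2 / (2 * 18 ^ 2)) * N = -(N * (δ ^ 2 / (2 * 18 ^ 2))) by ring]
  calc N ^ (n + 1) * Real.exp (-(N * (δ ^ 2 / (2 * 18 ^ 2))))
      = N * N ^ n * Real.exp (-(N * (δ ^ 2 / (2 * 18 ^ 2)))) := by ring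
    _ ≤ N * (T * N) * Real.exp (-(N * (δ ^ 2 / (2 * 18 ^ 2)))) := by gcongr
    _ = _ := by ring

/-- A.a.s. the number of subtrees of a uniformly random labelled tree on `n` vertices
is at least `1.37135 ^ n`. -/
theorem aas_subtree_lower_bound_137135 :
    Tendsto (fun n : ℕ =>
      treeProb n (fun G => (1.37135 : ℝ) ^ n ≤ (subtreeCount G : ℝ)))
      atTop (𝓝 1) := by
  obtain ⟨δ, hδ, hmean⟩ := mean_chainWeight
  have hlim : Tendsto (fun n : ℕ => 1 - (n : ℝ) ^ 2 * Real.exp (-(δ ^ 2 / (2 * 18 ^ 2)) * n))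
      atTop (𝓝 1) := by
    have hc : 0 < δ ^ 2 / (2 * 18 ^ 2) := by positivity
    have h := (tendsto_rpow_mul_exp_neg_mul_atTop_nhds_zero 2 _ hc).comp
      tendsto_natCast_atTop_atTop
    have h' := h.const_sub (1 : ℝ)
    rw [sub_zero] at h'
    refine h'.congr fun n => ?_
    simp
  refine tendsto_of_tendsto_of_tendsto_of_le_of_le' hlim tendsto_const_nhds ?_ ?_
  · filter_upwards [hmean, eventually_ge_atTop 1] with n hn h1
    obtain ⟨m, rfl⟩ := Nat.exists_eq_add_of_le' h1
    exact treeProb_ge hδ m hn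
  · refine Eventually.of_forall fun n => ?_
    refine div_le_one_of_le₀ ?_ (Nat.cast_nonneg _)
    exact_mod_cast Nat.card_le_card_of_injective
      (fun G : {G : SimpleGraph (Fin n) //
        G.IsTree ∧ (1.37135 : ℝ) ^ n ≤ (subtreeCount G : ℝ)} =>
        (⟨G.1, G.2.1⟩ : {G : SimpleGraph (Fin n) // G.IsTree}))
      fun G H h => Subtype.ext (Subtype.mk.inj h)
end

section
/- Asymptotically almost surely, the number of subtrees of a uniformly random labelled tree on n vertices is at least 1.41805^n; that is, the probability that c(𝒯_n) ≥ 1.41805^n tends to 1 as n → ∞. -/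
/-!
It suffices to count subtrees that contain the vertex `0`, taken as root. Let `x` be their number.
If a rooted tree arises by joining the root of `a` to the root of `b` (which stays the root), then
`x = (1 + x_a) * x_b`, since a subtree through the root either avoids the branch `a` or meets it in
a subtree through the root of `a`. Cutting off the branch containing the least non-root vertex
gives a unique such decomposition, hence a recursion for `L k g`, the sum of `g x` over
labelled trees on `k` vertices with a fixed root, divided by `(k - 1)!` (`weight_codes`,
`exists_lower_statistic`).

For `g x = x ^ (-s)` the recursion says `M = z exp N` for the generating functions
`M = ∑ L k (x ^ (-s)) z ^ k` and `N = ∑ L k ((1 + x) ^ (-s)) z ^ k`. If the partial sums of `M` are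
at most `1`, those of `N` are at most `1` minus the defect `∑ L k (x ^ (-s) - (1 + x) ^ (-s)) z ^ k`.
As `s → 0` the defect is `s` times the mean of `log (1 + 1 / x)` at `z = 1 / e`, so for every `c`
below a truncation of this mean and small `s > 0` the bound `M ≤ 1` propagates at
`z = exp (-1 + s c)` (`bootstrap`), and therefore `L n (x ^ (-s)) ≤ exp ((1 - s c) n)`
(`exists_moment_bound`).

The mean, truncated at tree size `28`, exceeds `0.349284 > log 1.41805`
(`truncated_mean_gt`, `base_lt_exp`). This is integer arithmetic: sizes up to `7` use the exact law
of `x`, larger sizes use alternating Taylor polynomials in `1 / x`, whose coefficients multiply the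
integer-order moments of `1 / x`; these moments satisfy the same recursion.

Markov's inequality (`card_bad_le`) now bounds the number of trees with fewer than `1.41805 ^ n`
subtrees by `(n - 1)! exp ((1 - δ) n)` with `δ > 0`. There are at least `n ^ (n - 2)` trees, by
Pitman's double counting of rooted forests (`pow_le_card_trees`), so by Stirling's formula the
proportion of such trees tends to zero (`tendsto_bad`).
-/

open Filter Topology

namespace SubtreeBound

/-! ### The functional of rooted subtree counts -/

/-- `(k - 1)! * L k g` is the sum of `g x` over the labelled trees on `k` vertices with a fixed root,
where `x` is the number of subtrees that contain the root. For `k + 2`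
vertices the recursion cuts off the branch containing a distinguished non-root vertex: if the branch
has `i + 1` vertices, there are `k.choose i` ways to choose the others and `i + 1` choices of its own
root, and the factorials turn this into the weight `(i + 1) / (k + 1)`. `L 0` is zero by convention. -/
noncomputable def L : ℕ → (ℕ → ℝ) → ℝ
  | 0, _ => 0
  | 1, g => g 1
  | k + 2, g =>
      (∑ i : Fin (k + 1), ((i : ℕ) + 1 : ℝ) * L (i + 1)
        (fun x => L (k + 1 - i) (fun y => g ((1 + x) * y)))) / (k + 1)
  termination_by k => k
  decreasing_by all_goals omega

lemma L_zero (g : ℕ → ℝ) : L 0 g = 0 := by rw [L]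
lemma L_one (g : ℕ → ℝ) : L 1 g = g 1 := by rw [L]
lemma L_succ (k : ℕ) (g : ℕ → ℝ) : L (k + 2) g =
    (∑ i ∈ Finset.range (k + 1), ((i : ℕ) + 1 : ℝ) * L (i + 1)
        (fun x => L (k + 1 - i) (fun y => g ((1 + x) * y)))) / (k + 1) := by
  rw [L, Finset.sum_range]

lemma L_mono (k : ℕ) : ∀ g h : ℕ → ℝ, (∀ x, 1 ≤ x → g x ≤ h x) → L k g ≤ L k h := by
  induction k using Nat.strong_induction_on with
  | _ k ih =>
    intro g h hgh
    match k with
    | 0 => simp [L_zero]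
    | 1 => simpa [L_one] using hgh 1 le_rfl
    | k + 2 =>
      rw [L_succ, L_succ]
      gcongr with i hi
      rw [Finset.mem_range] at hi
      apply ih _ (by omega)
      intro x _
      apply ih _ (by omega)
      intro y hy
      exact hgh _ (Nat.mul_pos (by omega) hy)

lemma L_congr (k : ℕ) {g h : ℕ → ℝ} (H : ∀ x, 1 ≤ x → g x = h x) : L k g = L k h :=
  le_antisymm (L_mono k _ _ fun x hx => (H x hx).le) (L_mono k _ _ fun x hx => (H x hx).ge)

lemma L_zero_fun (k : ℕ) : L k (fun _ => 0) = 0 := by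
  induction k using Nat.strong_induction_on with
  | _ k ih =>
    match k with
    | 0 => simp [L_zero]
    | 1 => simp [L_one]
    | k + 2 =>
      rw [L_succ, Finset.sum_eq_zero, zero_div]
      intro i hi
      rw [Finset.mem_range] at hi
      rw [ih _ (by omega), ih _ (by omega), mul_zero]

lemma L_nonneg (k : ℕ) (g : ℕ → ℝ) (hg : ∀ x, 1 ≤ x → 0 ≤ g x) : 0 ≤ L k g := by
  rw [← L_zero_fun k]; exact L_mono k _ _ hg

lemma L_pos (k : ℕ) (hk : 1 ≤ k) : ∀ g : ℕ → ℝ, (∀ x, 1 ≤ x → 0 < g x) → 0 < L k g := by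
  induction k using Nat.strong_induction_on with
  | _ k ih =>
    intro g hg
    match k with
    | 0 => omega
    | 1 => simpa [L_one] using hg 1 le_rfl
    | k + 2 =>
      rw [L_succ]
      refine div_pos (Finset.sum_pos (fun i hi => ?_) (by simp)) (by positivity)
      rw [Finset.mem_range] at hi
      refine mul_pos (by positivity) (ih _ (by omega) (by omega) _ fun x _ => ?_)
      exact ih _ (by omega) (by omega) _ fun y hy => hg _ (Nat.mul_pos (by omega) hy)

lemma L_add (k : ℕ) : ∀ g h : ℕ → ℝ, L k (fun x => g x + h x) = L k g + L k h := by
  induction k using Nat.strong_induction_on with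
  | _ k ih =>
    intro g h
    match k with
    | 0 => simp [L_zero]
    | 1 => simp [L_one]
    | k + 2 =>
      rw [L_succ, L_succ, L_succ, ← add_div, ← Finset.sum_add_distrib]
      congr 1
      refine Finset.sum_congr rfl fun i hi => ?_
      rw [Finset.mem_range] at hi
      rw [← mul_add, ← ih _ (by omega)]
      simp_rw [ih (k + 1 - i) (by omega)]

lemma L_smul (k : ℕ) : ∀ (c : ℝ) (g : ℕ → ℝ), L k (fun x => c * g x) = c * L k g := by
  induction k using Nat.strong_induction_on with
  | _ k ih =>
    intro c g
    match k with
    | 0 => simp [L_zero]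
    | 1 => simp [L_one]
    | k + 2 =>
      rw [L_succ, L_succ, ← mul_div_assoc, Finset.mul_sum]
      congr 1
      refine Finset.sum_congr rfl fun i hi => ?_
      rw [Finset.mem_range] at hi
      simp_rw [ih (k + 1 - i) (by omega)]
      rw [ih _ (by omega)]
      ring

lemma L_sub (k : ℕ) (g h : ℕ → ℝ) : L k (fun x => g x - h x) = L k g - L k h := by
  have := L_add k g (fun x => (-1) * h x)
  rw [L_smul] at this
  simp only [neg_one_mul, ← sub_eq_add_neg] at this
  exact this

lemma L_sum {ι : Type*} (k : ℕ) (s : Finset ι) (g : ι → ℕ → ℝ) :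
    L k (fun x => ∑ i ∈ s, g i x) = ∑ i ∈ s, L k (g i) := by
  classical
  induction s using Finset.induction_on with
  | empty => simp [L_zero_fun]
  | insert a s ha ih =>
    simp only [Finset.sum_insert ha]
    rw [L_add, ih]

/-- `L k` depends continuously on its test function, because only finitely many values of it enter. -/
lemma L_tendsto {ι : Type*} {l : Filter ι} (k : ℕ) : ∀ (g : ι → ℕ → ℝ) (g₀ : ℕ → ℝ),
    (∀ x, Tendsto (fun s => g s x) l (𝓝 (g₀ x))) →
    Tendsto (fun s => L k (g s)) l (𝓝 (L k g₀)) := by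
  induction k using Nat.strong_induction_on with
  | _ k ih =>
    intro g g₀ hg
    match k with
    | 0 => simpa [L_zero] using tendsto_const_nhds
    | 1 => simpa [L_one] using hg 1
    | k + 2 =>
      simp_rw [L_succ]
      refine Tendsto.div_const (tendsto_finsetSum _ fun i hi => ?_) _
      rw [Finset.mem_range] at hi
      refine Tendsto.const_mul _ (ih _ (by omega) _ _ fun x => ?_)
      exact ih _ (by omega) _ _ fun y => hg _

/-! ### Exponential bounds for negative moments -/

/-- For a multiplicative test function the nested functionals factor. -/
lemma L_mult (k : ℕ) (g : ℕ → ℝ) (hg : ∀ x y, g (x * y) = g x * g y) :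
    (k + 1) * L (k + 2) g =
      ∑ i ∈ Finset.range (k + 1), ((i : ℝ) + 1) * L (i + 1) (fun x => g (1 + x)) * L (k + 1 - i) g := by
  rw [L_succ, mul_div_cancel₀ _ (by positivity)]
  refine Finset.sum_congr rfl fun i _ => ?_
  simp_rw [hg, L_smul]
  have : ∀ c : ℝ, L (i + 1) (fun x => g (1 + x) * c) = L (i + 1) (fun x => g (1 + x)) * c := by
    intro c
    simp_rw [mul_comm _ c, L_smul]
  rw [this, mul_assoc]

/-- The size-generating function `M = z exp N`, in truncated form: a sequence built from `n` by the
recursion `(k - 1) m_k = ∑ i n_i m_{k-i}` has partial sums at most `z exp (∑ n_i z ^ i)`. -/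
lemma partial_sum_le (m n : ℕ → ℝ) (hm : ∀ k, 0 ≤ m k) (hn : ∀ k, 0 ≤ n k) (h1 : m 1 = 1)
    (hrec : ∀ k : ℕ, (k + 1) * m (k + 2) =
      ∑ i ∈ Finset.range (k + 1), ((i : ℝ) + 1) * n (i + 1) * m (k + 1 - i))
    (N : ℕ) (z : ℝ) (hz : 0 ≤ z) :
    ∑ k ∈ Finset.range (N + 1), m (k + 1) * z ^ (k + 1) ≤
      z * Real.exp (∑ k ∈ Finset.range N, n (k + 1) * z ^ (k + 1)) := by
  -- `Q = M(z) / z` and `P = N(z)`, truncated; `Q exp (-P)` is nonincreasing and equals `1` at `0`.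
  set Q : ℝ → ℝ := fun z => ∑ k ∈ Finset.range (N + 1), m (k + 1) * z ^ k with hQ
  set P : ℝ → ℝ := fun z => ∑ k ∈ Finset.range N, n (k + 1) * z ^ (k + 1) with hP
  have hQ' : ∀ z, HasDerivAt Q (∑ k ∈ Finset.range N, m (k + 2) * ((k + 1) * z ^ k)) z := by
    intro z
    have h : HasDerivAt Q (∑ k ∈ Finset.range (N + 1), m (k + 1) * ((k : ℕ) * z ^ (k - 1))) z := by
      rw [hQ]
      exact HasDerivAt.fun_sum fun k _ => (hasDerivAt_pow k z).const_mul _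
    convert h using 1
    rw [Finset.sum_range_succ']
    simp
  have hP' : ∀ z, HasDerivAt P (∑ k ∈ Finset.range N, n (k + 1) * ((k + 1) * z ^ k)) z := by
    intro z
    rw [hP]
    refine HasDerivAt.fun_sum fun k _ => ?_
    have := (hasDerivAt_pow (k + 1) z).const_mul (n (k + 1))
    simpa using this
  have hle : ∀ z, 0 ≤ z → (∑ k ∈ Finset.range N, m (k + 2) * ((k + 1) * z ^ k)) ≤
      (∑ k ∈ Finset.range N, n (k + 1) * ((k + 1) * z ^ k)) * Q z := by
    intro z hz
    have e : ∀ k, m (k + 2) * ((k + 1) * z ^ k) = ∑ i ∈ Finset.range (k + 1),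
        (n (i + 1) * ((i + 1) * z ^ i)) * (m (k - i + 1) * z ^ (k - i)) := by
      intro k
      rw [← mul_assoc, mul_comm (m _), hrec, Finset.sum_mul]
      refine Finset.sum_congr rfl fun i hi => ?_
      have hi : i ≤ k := by simpa [Nat.lt_succ_iff] using hi
      have h2 : z ^ k = z ^ i * z ^ (k - i) := by rw [← pow_add]; congr 1; omega
      rw [h2, show k + 1 - i = k - i + 1 by omega]
      ring
    simp_rw [e]
    rw [Finset.sum_range_diag_flip N
      (fun i j => (n (i + 1) * ((i + 1) * z ^ i)) * (m (j + 1) * z ^ j)), Finset.sum_mul]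
    refine Finset.sum_le_sum fun i _ => ?_
    rw [hQ, ← Finset.mul_sum]
    have := hn (i + 1)
    refine mul_le_mul_of_nonneg_left ?_ (by positivity)
    refine Finset.sum_le_sum_of_subset_of_nonneg (fun j hj => ?_) fun j _ _ => ?_
    · simp only [Finset.mem_range] at hj ⊢
      omega
    · exact mul_nonneg (hm _) (by positivity)
  have hanti : AntitoneOn (fun z => Q z * Real.exp (- P z)) (Set.Ici 0) := by
    apply antitoneOn_of_hasDerivWithinAt_nonpos (convex_Ici 0)
      (f' := fun z => ((∑ k ∈ Finset.range N, m (k + 2) * ((k + 1) * z ^ k)) -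
      (∑ k ∈ Finset.range N, n (k + 1) * ((k + 1) * z ^ k)) * Q z) * Real.exp (- P z))
    · have h1 : Continuous Q := continuous_iff_continuousAt.2 fun z => (hQ' z).continuousAt
      have h2 : Continuous P := continuous_iff_continuousAt.2 fun z => (hP' z).continuousAt
      fun_prop
    · intro x _
      refine HasDerivAt.hasDerivWithinAt ?_
      have h := (hQ' x).mul (hP' x).neg.exp
      refine h.congr_deriv ?_
      simp only [Pi.neg_apply]
      ring
    · intro x hx
      rw [interior_Ici] at hx
      exact mul_nonpos_of_nonpos_of_nonneg (sub_nonpos.2 (hle x (le_of_lt hx)))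
        (Real.exp_pos _).le
  have h := hanti (Set.mem_Ici.2 le_rfl) (Set.mem_Ici.2 hz) hz
  have hQ0 : Q 0 = 1 := by
    simp only [hQ]
    rw [Finset.sum_range_succ']
    simp [h1]
  have hP0 : P 0 = 0 := by simp [hP]
  simp only [hQ0, hP0, neg_zero, Real.exp_zero, mul_one] at h
  rw [Real.exp_neg, ← div_eq_mul_inv, div_le_one (Real.exp_pos _)] at h
  calc ∑ k ∈ Finset.range (N + 1), m (k + 1) * z ^ (k + 1) = z * Q z := by
        simp only [hQ, Finset.mul_sum]
        refine Finset.sum_congr rfl fun k _ => ?_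
        ring
    _ ≤ _ := mul_le_mul_of_nonneg_left h hz

/-- If the defect `∑ (m_k - n_k) z ^ k` over `k ≤ K` is large enough, then `1` is a
super-solution of `M = z exp N`, and all partial sums of `M` stay below it. -/
lemma bootstrap (m n : ℕ → ℝ) (hm : ∀ k, 0 ≤ m k) (hn : ∀ k, 0 ≤ n k) (hnm : ∀ k, n k ≤ m k)
    (h1 : m 1 = 1)
    (hrec : ∀ k : ℕ, (k + 1) * m (k + 2) =
      ∑ i ∈ Finset.range (k + 1), ((i : ℝ) + 1) * n (i + 1) * m (k + 1 - i))
    (K : ℕ) (z : ℝ) (hz : 0 ≤ z)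
    (hbase : ∑ k ∈ Finset.range K, m (k + 1) * z ^ (k + 1) ≤ 1)
    (hsuper : z * Real.exp (1 - ∑ k ∈ Finset.range K, (m (k + 1) - n (k + 1)) * z ^ (k + 1)) ≤ 1)
    (N : ℕ) : ∑ k ∈ Finset.range N, m (k + 1) * z ^ (k + 1) ≤ 1 := by
  induction N with
  | zero => simp
  | succ N ih =>
    rcases Nat.lt_or_ge N K with hNK | hNK
    · refine le_trans (Finset.sum_le_sum_of_subset_of_nonneg (fun j hj => ?_) fun j _ _ => ?_) hbase
      · simp only [Finset.mem_range] at hj ⊢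
        omega
      · exact mul_nonneg (hm _) (by positivity)
    · refine (partial_sum_le m n hm hn h1 hrec N z hz).trans (le_trans ?_ hsuper)
      gcongr
      have h2 : ∑ k ∈ Finset.range K, (m (k + 1) - n (k + 1)) * z ^ (k + 1) ≤
          ∑ k ∈ Finset.range N, (m (k + 1) - n (k + 1)) * z ^ (k + 1) := by
        refine Finset.sum_le_sum_of_subset_of_nonneg (fun j hj => ?_) fun j _ _ => ?_
        · simp only [Finset.mem_range] at hj ⊢
          omega
        · exact mul_nonneg (sub_nonneg.2 (hnm _)) (by positivity)
      simp only [sub_mul, Finset.sum_sub_distrib] at h2 ⊢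
      linarith

/-- With `s = 0` and `z = 1 / e` the generating function is that of all labelled trees. -/
lemma sum_L_one_le (N : ℕ) :
    ∑ k ∈ Finset.range N, L (k + 1) (fun _ => 1) * Real.exp (-1) ^ (k + 1) ≤ 1 := by
  refine bootstrap (fun k => L k (fun _ => 1)) (fun k => L k (fun _ => 1))
    (fun k => L_nonneg _ _ (by simp)) (fun k => L_nonneg _ _ (by simp)) (fun k => le_rfl)
    (by simp [L_one]) (fun k => ?_) 0 _ (Real.exp_pos _).le (by simp) (by simp [← Real.exp_add]) N
  exact L_mult k (fun _ => 1) (by simp)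

/-- Exponential upper bound for the negative moments of small order `s`: the exponential rate is
`1 - s c` for every `c` below the truncated mean of `log (1 + 1 / x)`. -/
lemma exists_moment_bound (c : ℝ) (hc : 0 ≤ c) (K : ℕ)
    (hμ : c < ∑ k ∈ Finset.range K,
      L (k + 1) (fun x => Real.log (1 + x) - Real.log x) * Real.exp (-1) ^ (k + 1)) :
    ∃ s : ℝ, 0 < s ∧ ∀ n : ℕ, L (n + 1) (fun x => (x : ℝ) ^ (-s)) ≤
      Real.exp ((1 - s * c) * (n + 1)) := by
  have hz : Tendsto (fun s : ℝ => Real.exp (-1 + s * c)) (𝓝[>] 0) (𝓝 (Real.exp (-1))) := by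
    have : Continuous (fun s : ℝ => Real.exp (-1 + s * c)) := by fun_prop
    simpa using (this.tendsto 0).mono_left nhdsWithin_le_nhds
  -- the base condition holds with strict inequality at `s = 0`
  have hbase0 : ∑ k ∈ Finset.range K, L (k + 1) (fun _ => 1) * Real.exp (-1) ^ (k + 1) < 1 := by
    have h := sum_L_one_le (K + 1)
    rw [Finset.sum_range_succ] at h
    have : 0 < L (K + 1) (fun _ => 1) * Real.exp (-1) ^ (K + 1) :=
      mul_pos (L_pos _ (by omega) _ (by simp)) (pow_pos (Real.exp_pos _) _)
    linarith
  have hm : ∀ k, Tendsto (fun s : ℝ => L k (fun x => if x = 0 then 1 else (x : ℝ) ^ (-s)))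
      (𝓝[>] 0) (𝓝 (L k fun _ => 1)) := by
    intro k
    refine L_tendsto k _ _ fun x => ?_
    rcases eq_or_ne x 0 with rfl | hx
    · simp
    · have hx' : (x : ℝ) ≠ 0 := by exact_mod_cast hx
      have : Continuous (fun s : ℝ => (x : ℝ) ^ (-s)) :=
        Real.continuous_const_rpow hx' |>.comp continuous_neg
      simpa [hx] using (this.tendsto 0).mono_left nhdsWithin_le_nhds
  have hm' : ∀ (k : ℕ) (s : ℝ), L k (fun x => if x = 0 then 1 else (x : ℝ) ^ (-s)) =
      L k (fun x => (x : ℝ) ^ (-s)) := by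
    intro k s
    exact L_congr k fun x hx => by simp [show x ≠ 0 by omega]
  simp_rw [hm'] at hm
  have hbase : Tendsto (fun s : ℝ => ∑ k ∈ Finset.range K,
      L (k + 1) (fun x => (x : ℝ) ^ (-s)) * Real.exp (-1 + s * c) ^ (k + 1)) (𝓝[>] 0)
      (𝓝 (∑ k ∈ Finset.range K, L (k + 1) (fun _ => 1) * Real.exp (-1) ^ (k + 1))) :=
    tendsto_finsetSum _ fun k _ => (hm _).mul (hz.pow _)
  have hder : ∀ k, Tendsto (fun s : ℝ =>
      L k (fun x => if x = 0 then 0 else ((x : ℝ) ^ (-s) - ((1 + x : ℕ) : ℝ) ^ (-s)) / s)) (𝓝[>] 0)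
      (𝓝 (L k fun x => if x = 0 then 0 else Real.log (1 + x) - Real.log x)) := by
    intro k
    refine L_tendsto k _ _ fun x => ?_
    rcases eq_or_ne x 0 with rfl | hx
    · simp
    · have hx' : 0 < (x : ℝ) := by positivity
      have hd : HasDerivAt (fun s : ℝ => (x : ℝ) ^ (-s) - ((1 + x : ℕ) : ℝ) ^ (-s))
          (Real.log (1 + x) - Real.log x) 0 := by
        have h1 := ((hasDerivAt_neg (0 : ℝ)).const_rpow (a := (x : ℝ)) hx')
        have h2 := ((hasDerivAt_neg (0 : ℝ)).const_rpow (a := ((1 + x : ℕ) : ℝ)) (by positivity))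
        refine (h1.sub h2).congr_deriv ?_
        push_cast
        simp
        ring
      have := hd.tendsto_slope_zero_right
      simp only [hx, if_false]
      refine this.congr fun s => ?_
      simp
      ring
  have hlog : ∀ k, (L k fun x => if x = 0 then 0 else Real.log (1 + x) - Real.log x) =
      L k fun x => Real.log (1 + x) - Real.log x := fun k =>
    L_congr k fun x hx => by simp [show x ≠ 0 by omega]
  have hdef : ∀ (k : ℕ) (s : ℝ), L k (fun x => if x = 0 then 0 else
      ((x : ℝ) ^ (-s) - ((1 + x : ℕ) : ℝ) ^ (-s)) / s) =
      (L k (fun x => (x : ℝ) ^ (-s)) - L k (fun x => ((1 + x : ℕ) : ℝ) ^ (-s))) / s := by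
    intro k s
    rw [← L_sub, div_eq_inv_mul, ← L_smul]
    exact L_congr k fun x hx => by simp [show x ≠ 0 by omega]; ring
  simp_rw [hlog, hdef] at hder
  have hsum : Tendsto (fun s : ℝ => ∑ k ∈ Finset.range K,
      (L (k + 1) (fun x => (x : ℝ) ^ (-s)) - L (k + 1) (fun x => ((1 + x : ℕ) : ℝ) ^ (-s))) / s *
        Real.exp (-1) ^ (k + 1)) (𝓝[>] 0)
      (𝓝 (∑ k ∈ Finset.range K,
      L (k + 1) (fun x => Real.log (1 + x) - Real.log x) * Real.exp (-1) ^ (k + 1))) :=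
    tendsto_finsetSum _ fun k _ => (hder _).mul_const _
  obtain ⟨s, ⟨hs1, hs2⟩, hs0⟩ := (((hbase.eventually_lt_const hbase0).and
    (hsum.eventually_const_lt hμ)).and self_mem_nhdsWithin).exists
  have hs0 : 0 < s := hs0
  refine ⟨s, hs0, fun n => ?_⟩
  have hnm : ∀ k, L k (fun x => ((1 + x : ℕ) : ℝ) ^ (-s)) ≤ L k (fun x => (x : ℝ) ^ (-s)) := by
    intro k
    refine L_mono k _ _ fun x hx => ?_
    refine Real.rpow_le_rpow_of_nonpos (by exact_mod_cast hx) (by push_cast; linarith) (by linarith)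
  have hnn : ∀ k, 0 ≤ L k (fun x => ((1 + x : ℕ) : ℝ) ^ (-s)) := fun k =>
    L_nonneg _ _ fun x _ => by positivity
  have hboot := bootstrap (fun k => L k (fun x => (x : ℝ) ^ (-s)))
    (fun k => L k (fun x => ((1 + x : ℕ) : ℝ) ^ (-s)))
    (fun k => (hnn k).trans (hnm k)) hnn hnm (by simp [L_one])
    (fun k => L_mult k (fun x => (x : ℝ) ^ (-s)) fun x y => by
      push_cast
      exact Real.mul_rpow (by positivity) (by positivity)) K
    (Real.exp (-1 + s * c)) (Real.exp_pos _).le hs1.le ?_ (n + 1)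
  · rw [Finset.sum_range_succ] at hboot
    have h0 : 0 ≤ ∑ k ∈ Finset.range n, L (k + 1) (fun x => (x : ℝ) ^ (-s)) *
        Real.exp (-1 + s * c) ^ (k + 1) := Finset.sum_nonneg fun k _ =>
      mul_nonneg ((hnn _).trans (hnm _)) (by positivity)
    have h2 : L (n + 1) (fun x => (x : ℝ) ^ (-s)) * Real.exp (-1 + s * c) ^ (n + 1) ≤ 1 := by
      linarith
    rw [← le_div_iff₀ (by positivity), ← Real.exp_nat_mul, one_div, ← Real.exp_neg] at h2
    refine h2.trans (le_of_eq ?_)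
    congr 1
    push_cast
    ring
  · rw [← Real.exp_add, Real.exp_le_one_iff]
    have h3 : s * c ≤ ∑ k ∈ Finset.range K, (L (k + 1) (fun x => (x : ℝ) ^ (-s)) -
        L (k + 1) (fun x => ((1 + x : ℕ) : ℝ) ^ (-s))) * Real.exp (-1 + s * c) ^ (k + 1) := by
      calc s * c ≤ s * _ := mul_le_mul_of_nonneg_left hs2.le hs0.le
        _ ≤ _ := by
          rw [Finset.mul_sum]
          refine Finset.sum_le_sum fun k _ => ?_
          rw [← mul_assoc, mul_div_cancel₀ _ hs0.ne']
          refine mul_le_mul_of_nonneg_left ?_ (sub_nonneg.2 (hnm _))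
          gcongr
          have := mul_nonneg hs0.le hc
          linarith
    linarith

/-! ### Bounding the truncated mean of `log (1 + 1 / x)` -/

/-- The number of labelled trees of size `k` (with fixed root) in which the root lies in exactly
`x` subtrees, as a list of pairs `(x, multiplicity)`, for `k ≤ 7`. -/
def smallLaw : ℕ → List (ℕ × ℕ)
  | 1 => [(1, 1)]
  | 2 => [(2, 1)]
  | 3 => [(3, 2), (4, 1)]
  | 4 => [(4, 6), (5, 3), (6, 6), (8, 1)]
  | 5 => [(5, 24), (6, 12), (7, 24), (8, 24), (9, 16), (10, 12), (12, 12), (16, 1)]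
  | 6 => [(6, 120), (7, 60), (8, 120), (9, 120), (10, 200), (11, 60), (12, 180), (13, 60),
      (14, 120), (15, 60), (16, 60), (17, 5), (18, 80), (20, 30), (24, 20), (32, 1)]
  | 7 => [(7, 720), (8, 360), (9, 720), (10, 720), (11, 1200), (12, 1080), (13, 1080),
      (14, 720), (15, 1440), (16, 1440), (17, 360), (18, 1110), (19, 480), (20, 1200),
      (21, 900), (22, 360), (24, 900), (25, 210), (26, 360), (27, 240), (28, 360), (30, 360),
      (32, 120), (33, 6), (34, 30), (36, 240), (40, 60), (48, 30), (64, 1)]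
  | _ => []

/-- `smallLaw` is the exact law behind `L k` for `k ≤ 7`; it comes from unfolding the recursion. -/
lemma L_smallLaw (k : ℕ) (hk1 : 1 ≤ k) (hk : k ≤ 7) (g : ℕ → ℝ) :
    ((k - 1).factorial : ℝ) * L k g = ((smallLaw k).map fun p => (p.2 : ℝ) * g p.1).sum := by
  have h1 : ∀ g, L 1 g = g 1 := L_one
  have h2 : ∀ g, L 2 g = g 2 := by
    intro g; rw [L_succ 0]; simp [h1]
  have h3 : ∀ g, L 3 g = (2 * g 3 + g 4) / 2 := by
    intro g; rw [L_succ 1]; simp [Finset.sum_range_succ, h1, h2]; ring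
  have h4 : ∀ g, L 4 g = (6 * g 4 + 3 * g 5 + 6 * g 6 + g 8) / 6 := by
    intro g; rw [L_succ 2]; simp [Finset.sum_range_succ, h1, h2, h3]; ring
  have h5 : ∀ g, 24 * L 5 g = ((smallLaw 5).map fun p => (p.2 : ℝ) * g p.1).sum := by
    intro g; rw [L_succ 3]; simp [Finset.sum_range_succ, h1, h2, h3, h4, smallLaw]; ring
  have h5' : ∀ g, L 5 g = ((smallLaw 5).map fun p => (p.2 : ℝ) * g p.1).sum / 24 := by
    intro g; rw [← h5]; ring
  have h6 : ∀ g, 120 * L 6 g = ((smallLaw 6).map fun p => (p.2 : ℝ) * g p.1).sum := by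
    intro g; rw [L_succ 4]; simp [Finset.sum_range_succ, h1, h2, h3, h4, h5', smallLaw]; ring
  have h6' : ∀ g, L 6 g = ((smallLaw 6).map fun p => (p.2 : ℝ) * g p.1).sum / 120 := by
    intro g; rw [← h6]; ring
  interval_cases k
  · simp [smallLaw, h1]
  · simp [smallLaw, h2]
  · simp [smallLaw, h3]; ring
  · simp [smallLaw, h4, Nat.factorial]; ring
  · rw [← h5]; simp [Nat.factorial]
  · rw [← h6]; simp [Nat.factorial]
  · rw [L_succ 5]
    simp [Finset.sum_range_succ, h1, h2, h3, h4, h5', h6', smallLaw, Nat.factorial]; ring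

/-- Row `k`, column `j`: a lower bound for `10 ^ 12 * rootMoment j k`. -/
def mLowerTable : List (List ℕ) :=
  [[],
   [0, 367879441150, 367879441150, 367879441150, 367879441150, 367879441150, 367879441150],
   [0, 67667641610, 33833820805, 16916910402, 8458455200, 4229227600, 2114613799],
   [0, 22819072997, 7087742370, 2232926966, 711895532, 229195146, 74372541],
   [0, 9844655900, 2067504930, 450201159, 101075677, 23265432, 5461904],
   [0, 4848191276, 719528430, 113853858, 19019844, 3319491, 599378],
   [0, 2590280861, 278929890, 33094287, 4262285, 586039, 84691],
   [0, 1461410241, 116143400, 10556501, 1074739, 119625, 14232],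
   [0, 856886960, 50842575, 3595544, 294830, 27116, 2712],
   [0, 516888315, 23077871, 1283662, 77909, 5394, 19],
   [0, 318596638, 10745554, 469095, 15928, 197, 0],
   [0, 199707605, 5088367, 169235, 612, 7, 0],
   [0, 126873388, 2435756, 58638, 70, 0, 0],
   [0, 81485557, 1176470, 19129, 11, 0, 0],
   [0, 52809937, 573346, 5631, 2, 0, 0],
   [0, 34487426, 281834, 1322, 0, 0, 0],
   [0, 22669316, 139660, 132, 0, 0, 0],
   [0, 14985462, 69722, 29, 0, 0, 0],
   [0, 9955267, 35042, 7, 0, 0, 0],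
   [0, 6642584, 17718, 2, 0, 0, 0],
   [0, 4449524, 9007, 0, 0, 0, 0],
   [0, 2990936, 4599, 0, 0, 0, 0],
   [0, 2016831, 2356, 0, 0, 0, 0],
   [0, 1363875, 1209, 0, 0, 0, 0],
   [0, 924728, 620, 0, 0, 0, 0],
   [0, 628484, 317, 0, 0, 0, 0],
   [0, 428088, 160, 0, 0, 0, 0],
   [0, 292185, 78, 0, 0, 0, 0],
   [0, 199804, 36, 0, 0, 0, 0]]

/-- Row `k`, column `j`: an upper bound for `10 ^ 12 * rootMoment j k`. -/
def mUpperTable : List (List ℕ) :=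
  [[],
   [0, 367879441193, 367879441193, 367879441193, 367879441193, 367879441193, 367879441193],
   [0, 67667641627, 33833820814, 16916910407, 8458455204, 4229227602, 2114613801],
   [0, 22819073007, 7087742374, 2232926968, 711895534, 229195148, 74372542],
   [0, 9844655906, 2067504933, 450201160, 101075679, 23265433, 5461905],
   [0, 4848191281, 719528432, 113853859, 19019845, 3319492, 599379],
   [0, 2590280864, 278929892, 33094289, 4262286, 586040, 84693],
   [0, 1461410243, 116143402, 10556503, 1074740, 119627, 14233],
   [0, 856886962, 50842577, 3595546, 294831, 27118, 2713],
   [0, 516889318, 23082868, 1293650, 87894, 10386, 1018],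
   [0, 318608589, 10775440, 499013, 30922, 3964, 382],
   [0, 199743272, 5146971, 207926, 13437, 1512, 143],
   [0, 126934535, 2508142, 92779, 5848, 577, 54],
   [0, 81561978, 1242926, 41286, 2517, 220, 21],
   [0, 52887862, 624317, 18301, 1075, 84, 8],
   [0, 34557240, 316912, 8088, 456, 33, 3],
   [0, 22726775, 162165, 3569, 192, 13, 2],
   [0, 15030106, 83462, 1573, 84, 5, 1],
   [0, 9988545, 43033, 693, 37, 2, 1],
   [0, 6666672, 22227, 305, 19, 1, 1],
   [0, 4466619, 11504, 135, 12, 1, 1],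
   [0, 3002913, 5970, 61, 9, 1, 1],
   [0, 2025158, 3107, 29, 8, 1, 1],
   [0, 1369641, 1625, 15, 7, 1, 1],
   [0, 928715, 855, 9, 7, 1, 1],
   [0, 631243, 455, 7, 7, 1, 1],
   [0, 430002, 247, 6, 7, 1, 1],
   [0, 293518, 138, 5, 7, 1, 1],
   [0, 200738, 81, 5, 7, 1, 1]]

/-- Row `k ≤ 7`, column `j`: a lower bound for `10 ^ 12 * shiftMoment j k`. -/
def nLowerTable : List (List ℕ) :=
  [[],
   [0, 183939720575, 91969860287, 45984930143, 22992465071, 11496232535, 5748116267],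
   [0, 45111761073, 15037253691, 5012417897, 1670805965, 556935321, 185645107],
   [0, 17425473925, 4107433139, 977071216, 234310390, 56586114, 13748232],
   [0, 8145129355, 1398484477, 246508176, 44464844, 8180166, 1529909],
   [0, 4226310414, 538053311, 72032768, 10074784, 1461799, 218538],
   [0, 2340695328, 223542888, 23133291, 2565663, 301258, 37011],
   [0, 1354855570, 97838009, 7930270, 709643, 68790, 7093]]

/-- Row `k ≤ 7`, column `j`: an upper bound for `10 ^ 12 * shiftMoment j k`. -/
def nUpperTable : List (List ℕ) :=
  [[],
   [0, 183939720597, 91969860299, 45984930150, 22992465075, 11496232538, 5748116269],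
   [0, 45111761085, 15037253695, 5012417899, 1670805967, 556935323, 185645108],
   [0, 17425473932, 4107433142, 977071217, 234310391, 56586115, 13748233],
   [0, 8145129360, 1398484478, 246508177, 44464845, 8180167, 1529910],
   [0, 4226310418, 538053312, 72032769, 10074785, 1461800, 218539],
   [0, 2340695330, 223542889, 23133292, 2565664, 301259, 37012],
   [0, 1354855572, 97838010, 7930271, 709644, 68791, 7094]]

/-- Entry `k ≤ 7`: a lower bound for `10 ^ 12 * exp (-k) * L k (log (1 + 1 / x))`. -/
def logTable : List ℕ :=
  [0, 254994597415, 54873735241, 19877678628, 8939598046, 4522201011, 2460886465, 1406610471]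

/-- The normalised `j`-th negative moment `e⁻ᵏ ∑ x⁻ʲ / (k - 1)!`, summed over the labelled trees of
size `k` with a fixed root, where `x` is the number of subtrees containing the root. -/
noncomputable def rootMoment (j k : ℕ) : ℝ :=
  L k (fun x => ((x : ℝ)⁻¹) ^ j) * Real.exp (-1) ^ k

/-- As `rootMoment`, with `1 + x` in place of `x`. -/
noncomputable def shiftMoment (j k : ℕ) : ℝ :=
  L k (fun x => (((1 + x : ℕ) : ℝ)⁻¹) ^ j) * Real.exp (-1) ^ k

lemma rootMoment_nonneg (j k : ℕ) : 0 ≤ rootMoment j k :=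
  mul_nonneg (L_nonneg _ _ fun x _ => by positivity) (by positivity)

lemma shiftMoment_nonneg (j k : ℕ) : 0 ≤ shiftMoment j k :=
  mul_nonneg (L_nonneg _ _ fun x _ => by positivity) (by positivity)

lemma rootMoment_succ (j k : ℕ) : (k + 1) * rootMoment j (k + 2) =
    ∑ i ∈ Finset.range (k + 1),
      ((i : ℝ) + 1) * shiftMoment j (i + 1) * rootMoment j (k + 1 - i) := by
  unfold rootMoment shiftMoment
  rw [← mul_assoc, L_mult k (fun x => ((x : ℝ)⁻¹) ^ j) (fun x y => by push_cast; rw [mul_inv, mul_pow]),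
    Finset.sum_mul]
  refine Finset.sum_congr rfl fun i hi => ?_
  have hi : i ≤ k := by simpa [Nat.lt_succ_iff] using hi
  rw [show k + 2 = (i + 1) + (k + 1 - i) by omega, pow_add]
  ring

/-- The Taylor polynomials of `(1 + X) ^ (-(j + 2))` and `(1 + X) ^ (-(j + 1))` differ by a factor
`1 + X`, up to one term of degree `I`. -/
lemma alternating_step (X : ℝ) (j I : ℕ) :
    (∑ i ∈ Finset.range I, (-1 : ℝ) ^ i * ((j + 1 + i).choose i : ℝ) * X ^ i) * (1 + X) =
    (∑ i ∈ Finset.range I, (-1 : ℝ) ^ i * ((j + i).choose i : ℝ) * X ^ i) -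
      (-1) ^ I * (((j + 1 + I).choose I : ℝ) - ((j + I).choose I : ℝ)) * X ^ I := by
  induction I with
  | zero => simp
  | succ I ih =>
    rw [Finset.sum_range_succ, Finset.sum_range_succ, add_mul, ih]
    have h : ((j + 1 + (I + 1)).choose (I + 1) : ℝ) =
        ((j + 1 + I).choose I : ℝ) + ((j + (I + 1)).choose (I + 1) : ℝ) := by
      have : (j + 1 + (I + 1)).choose (I + 1) =
          (j + 1 + I).choose I + (j + (I + 1)).choose (I + 1) := by
        rw [show j + 1 + (I + 1) = (j + 1 + I) + 1 by ring, Nat.choose_succ_succ,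
          show j + (I + 1) = j + 1 + I by ring]
      exact_mod_cast this
    rw [h]
    ring

/-- The Taylor polynomials of `(1 + X) ^ (-(j + 1))` bound it alternately from both sides. -/
lemma alternating_bound (X : ℝ) (hX : 0 ≤ X) (j I : ℕ) :
    0 ≤ (-1 : ℝ) ^ I * (((1 + X)⁻¹) ^ (j + 1) -
      ∑ i ∈ Finset.range I, (-1 : ℝ) ^ i * ((j + i).choose i : ℝ) * X ^ i) := by
  have h1 : 0 < 1 + X := by linarith
  have hsq : ∀ I : ℕ, ((-1 : ℝ) ^ I) * (-1) ^ I = 1 := by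
    intro I; rw [← mul_pow]; simp
  induction j with
  | zero =>
    have : (-1 : ℝ) ^ I * (((1 + X)⁻¹) ^ (0 + 1) -
      ∑ i ∈ Finset.range I, (-1 : ℝ) ^ i * ((0 + i).choose i : ℝ) * X ^ i) = X ^ I / (1 + X) := by
      have hg : (∑ i ∈ Finset.range I, (-1 : ℝ) ^ i * ((0 + i).choose i : ℝ) * X ^ i) =
          ∑ i ∈ Finset.range I, (-X) ^ i := by
        refine Finset.sum_congr rfl fun i _ => ?_
        rw [neg_pow X]; simp
      have hg2 := geom_sum_mul_neg (-X) I
      rw [hg]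
      rw [neg_pow X] at hg2
      have : ∑ i ∈ Finset.range I, (-X) ^ i = (1 - (-1) ^ I * X ^ I) / (1 + X) := by
        rw [eq_div_iff h1.ne', ← hg2]; ring
      rw [this, zero_add, pow_one, inv_eq_one_div, ← sub_div]
      rw [mul_div_assoc', div_left_inj' h1.ne']
      linear_combination (X ^ I) * hsq I
    rw [this]
    positivity
  | succ j ih =>
    have key := alternating_step X j I
    have hc : ((j + I).choose I : ℝ) ≤ ((j + 1 + I).choose I : ℝ) := by
      exact_mod_cast Nat.choose_le_choose I (by omega)
    have h2 : (-1 : ℝ) ^ I * (((1 + X)⁻¹) ^ (j + 1 + 1) -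
      ∑ i ∈ Finset.range I, (-1 : ℝ) ^ i * ((j + 1 + i).choose i : ℝ) * X ^ i) * (1 + X) =
      (-1 : ℝ) ^ I * (((1 + X)⁻¹) ^ (j + 1) -
      ∑ i ∈ Finset.range I, (-1 : ℝ) ^ i * ((j + i).choose i : ℝ) * X ^ i) +
      (((j + 1 + I).choose I : ℝ) - ((j + I).choose I : ℝ)) * X ^ I := by
      have e : ((1 + X)⁻¹) ^ (j + 1 + 1) * (1 + X) = ((1 + X)⁻¹) ^ (j + 1) := by
        rw [pow_succ, mul_assoc, inv_mul_cancel₀ h1.ne', mul_one]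
      rw [mul_assoc, sub_mul, e, key]
      linear_combination ((((j + 1 + I).choose I : ℝ) - ((j + I).choose I : ℝ)) * X ^ I) * hsq I
    refine nonneg_of_mul_nonneg_left ?_ h1
    rw [h2]
    have := mul_nonneg (sub_nonneg.2 hc) (pow_nonneg hX I)
    linarith

/-- Expanding `(1 + x)⁻¹ = x⁻¹ (1 + x⁻¹)⁻¹` in powers of `x⁻¹` bounds the shifted moments alternately
from both sides by the moments of higher order. -/
lemma shiftMoment_alternating (j k I : ℕ) :
    0 ≤ (-1 : ℝ) ^ I * (shiftMoment (j + 1) k -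
      ∑ i ∈ Finset.range I, (-1 : ℝ) ^ i * ((j + i).choose i : ℝ) * rootMoment (j + 1 + i) k) := by
  have h : 0 ≤ L k (fun x => (-1 : ℝ) ^ I * ((((1 + x : ℕ) : ℝ)⁻¹) ^ (j + 1) -
      ∑ i ∈ Finset.range I, ((-1 : ℝ) ^ i * ((j + i).choose i : ℝ)) * ((x : ℝ)⁻¹) ^ (j + 1 + i))) := by
    refine L_nonneg _ _ fun x hx => ?_
    have hx0 : (0 : ℝ) < x := by exact_mod_cast hx
    have hb := mul_nonneg (pow_nonneg (inv_nonneg.2 hx0.le) (j + 1))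
      (alternating_bound (x : ℝ)⁻¹ (inv_nonneg.2 hx0.le) j I)
    refine hb.trans_eq ?_
    have e : (((1 + x : ℕ) : ℝ)⁻¹) ^ (j + 1) = ((x : ℝ)⁻¹) ^ (j + 1) * ((1 + (x : ℝ)⁻¹)⁻¹) ^ (j + 1) := by
      rw [← mul_pow]
      congr 1
      push_cast
      field_simp
      ring
    rw [e, mul_left_comm, mul_sub, Finset.mul_sum]
    congr 2
    refine Finset.sum_congr rfl fun i _ => ?_
    rw [pow_add]
    ring
  rw [L_smul, L_sub, L_sum] at h
  simp_rw [L_smul] at h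
  have := mul_nonneg h (by positivity : 0 ≤ Real.exp (-1) ^ k)
  refine this.trans_eq ?_
  unfold shiftMoment rootMoment
  rw [mul_assoc, sub_mul, Finset.sum_mul]
  simp_rw [mul_assoc]

/-- The degree-six Taylor polynomial; the difference has derivative `X ^ 6 / (1 + X) ≥ 0`. -/
lemma log_one_add_ge (X : ℝ) (hX : 0 ≤ X) :
    X - X ^ 2 / 2 + X ^ 3 / 3 - X ^ 4 / 4 + X ^ 5 / 5 - X ^ 6 / 6 ≤ Real.log (1 + X) := by
  have hd : ∀ x : ℝ, 0 ≤ x → HasDerivAt (fun X : ℝ => Real.log (1 + X) -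
      (X - X ^ 2 / 2 + X ^ 3 / 3 - X ^ 4 / 4 + X ^ 5 / 5 - X ^ 6 / 6)) (x ^ 6 / (1 + x)) x := by
    intro x hx
    have h1 : 0 < 1 + x := by linarith
    have hl : HasDerivAt (fun X : ℝ => Real.log (1 + X)) (1 / (1 + x)) x :=
      ((hasDerivAt_id x).const_add 1).log h1.ne'
    have hp := (((((hasDerivAt_id x).sub ((hasDerivAt_pow 2 x).div_const 2)).add
      ((hasDerivAt_pow 3 x).div_const 3)).sub ((hasDerivAt_pow 4 x).div_const 4)).add
      ((hasDerivAt_pow 5 x).div_const 5)).sub ((hasDerivAt_pow 6 x).div_const 6)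
    refine (hl.sub hp).congr_deriv ?_
    field_simp
    ring
  have hmono : MonotoneOn (fun X : ℝ => Real.log (1 + X) -
      (X - X ^ 2 / 2 + X ^ 3 / 3 - X ^ 4 / 4 + X ^ 5 / 5 - X ^ 6 / 6)) (Set.Ici 0) := by
    apply monotoneOn_of_hasDerivWithinAt_nonneg (convex_Ici 0) (f' := fun x => x ^ 6 / (1 + x))
    · exact fun x hx => (hd x hx).continuousAt.continuousWithinAt
    · intro x hx
      rw [interior_Ici] at hx
      exact (hd x (le_of_lt hx)).hasDerivWithinAt
    · intro x hx
      rw [interior_Ici] at hx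
      have : 0 < x := hx
      positivity
  have := hmono (Set.mem_Ici.2 le_rfl) (Set.mem_Ici.2 hX) hX
  norm_num at this
  linarith

lemma L_log_ge (k : ℕ) : rootMoment 1 k - rootMoment 2 k / 2 + rootMoment 3 k / 3 -
    rootMoment 4 k / 4 + rootMoment 5 k / 5 - rootMoment 6 k / 6 ≤
    L k (fun x => Real.log (1 + x) - Real.log x) * Real.exp (-1) ^ k := by
  have h : ∑ i ∈ Finset.range 6, L k (fun x => ((-1 : ℝ) ^ i / (i + 1)) * ((x : ℝ)⁻¹) ^ (i + 1)) ≤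
      L k (fun x => Real.log (1 + x) - Real.log x) := by
    rw [← L_sum]
    refine L_mono k _ _ fun x hx => ?_
    have hx0 : (0 : ℝ) < x := by exact_mod_cast hx
    rw [← Real.log_div (by positivity) hx0.ne', add_div, div_self hx0.ne', one_div, add_comm]
    refine le_trans (le_of_eq ?_) (log_one_add_ge (x : ℝ)⁻¹ (by positivity))
    simp [Finset.sum_range_succ]
    ring
  refine le_trans (le_of_eq ?_) (mul_le_mul_of_nonneg_right h (by positivity))
  simp_rw [L_smul]
  unfold rootMoment
  simp [Finset.sum_range_succ]
  ring

/-- Integer lower bound for `10 ^ 12 * rootMoment j k`. -/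
def mLo (k j : ℕ) : ℤ := ((mLowerTable.getD k []).getD j 0 : ℕ)

/-- Integer upper bound for `10 ^ 12 * rootMoment j k`. -/
def mUp (k j : ℕ) : ℤ := ((mUpperTable.getD k []).getD j 0 : ℕ)

/-- Integer lower bound for `10 ^ 12 * shiftMoment j k`: tabulated for `k ≤ 7`, and for larger `k`
obtained from the moments of order at most `6` by an alternating sum. -/
def nLo (k j : ℕ) : ℤ :=
  if k ≤ 7 then ((nLowerTable.getD k []).getD j 0 : ℕ) else
    max 0 (∑ i ∈ Finset.range (2 * ((7 - j) / 2)), (-1) ^ i * ((j - 1 + i).choose i : ℤ) *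
      (if i % 2 = 0 then mLo k (j + i) else mUp k (j + i)))

/-- Integer upper bound for `10 ^ 12 * shiftMoment j k`. -/
def nUp (k j : ℕ) : ℤ :=
  if k ≤ 7 then ((nUpperTable.getD k []).getD j 0 : ℕ) else
    ∑ i ∈ Finset.range (2 * ((6 - j) / 2) + 1), (-1) ^ i * ((j - 1 + i).choose i : ℤ) *
      (if i % 2 = 0 then mUp k (j + i) else mLo k (j + i))

/-- Integer lower bound for `10 ^ 24 * log (1 + 1 / x)`, from the expansion of `artanh`. -/
def logLo (x : ℕ) : ℕ :=
  ((List.range 10).map fun i => 2 * 10 ^ 24 / ((2 * i + 1) * (2 * x + 1) ^ (2 * i + 1))).sum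

/-- The table entries for size one are the bounds of `exp_neg_one_bounds`. -/
lemma check_one : ∀ j < 7, 1 ≤ j → mLo 1 j = 367879441150 ∧ mUp 1 j = 367879441193 := by
  decide +kernel

/-- The lower table entries are consistent with the recursion `rootMoment_succ`, rounding downwards. -/
lemma check_lo : ∀ k : ℕ, k < 27 → ∀ j : ℕ, j < 7 → 1 ≤ j → ((k : ℤ) + 1) * mLo (k + 2) j * 10 ^ 12 ≤
    ∑ i ∈ Finset.range (k + 1), ((i : ℤ) + 1) * nLo (i + 1) j * mLo (k + 1 - i) j := by
  decide +kernel

/-- The upper table entries are consistent with the recursion `rootMoment_succ`, rounding upwards. -/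
lemma check_up : ∀ k : ℕ, k < 27 → ∀ j : ℕ, j < 7 → 1 ≤ j →
    ∑ i ∈ Finset.range (k + 1), ((i : ℤ) + 1) * nUp (i + 1) j * mUp (k + 1 - i) j ≤
      ((k : ℤ) + 1) * mUp (k + 2) j * 10 ^ 12 := by
  decide +kernel

/-- The hypothesis of `small_lower` for the entries of `nLowerTable`. -/
lemma check_nLo : ∀ k < 8, 1 ≤ k → ∀ j < 7, 1 ≤ j →
    (nLowerTable.getD k []).getD j 0 * (k - 1).factorial * 10 ^ 24 * (10 ^ 12) ^ k ≤
      10 ^ 12 * 367879441150 ^ k *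
        ((smallLaw k).map fun p => p.2 * (10 ^ 24 / (1 + p.1) ^ j)).sum := by
  decide +kernel

/-- The hypothesis of `small_upper` for the entries of `nUpperTable`. -/
lemma check_nUp : ∀ k < 8, 1 ≤ k → ∀ j < 7, 1 ≤ j →
    10 ^ 12 * 367879441193 ^ k *
        ((smallLaw k).map fun p => p.2 * (10 ^ 24 / (1 + p.1) ^ j + 1)).sum ≤
    (nUpperTable.getD k []).getD j 0 * (k - 1).factorial * 10 ^ 24 * (10 ^ 12) ^ k := by
  decide +kernel

/-- The hypothesis of `small_lower` for the entries of `logTable`. -/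
lemma check_log : ∀ k < 8, 1 ≤ k →
    logTable.getD k 0 * (k - 1).factorial * 10 ^ 24 * (10 ^ 12) ^ k ≤
      10 ^ 12 * 367879441150 ^ k * ((smallLaw k).map fun p => p.2 * logLo p.1).sum := by
  decide +kernel

/-- The final numerical inequality, scaled by `60 * 10 ^ 12`; `60` clears the denominators of the
Taylor polynomial in `L_log_ge`, which is used for the sizes `8` to `28`. -/
lemma check_total : (60 * 349284000000 : ℤ) <
    60 * (∑ k ∈ Finset.range 7, (logTable.getD (k + 1) 0 : ℤ)) +
    ∑ k ∈ Finset.range 21, (60 * mLo (k + 8) 1 - 30 * mUp (k + 8) 2 + 20 * mLo (k + 8) 3 -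
      15 * mUp (k + 8) 4 + 12 * mLo (k + 8) 5 - 10 * mUp (k + 8) 6) := by
  decide +kernel

lemma exp_neg_one_bounds : (367879441150 : ℝ) ≤ 10 ^ 12 * Real.exp (-1) ∧
    10 ^ 12 * Real.exp (-1) ≤ 367879441193 := by
  have h1 := Real.exp_one_gt_d9
  have h2 := Real.exp_one_lt_d9
  have h0 := Real.exp_pos 1
  rw [Real.exp_neg, ← div_eq_mul_inv, le_div_iff₀ h0, div_le_iff₀ h0]
  constructor <;> nlinarith

lemma sum_map_le_sum_map {l : List (ℕ × ℕ)} {u v : ℕ → ℝ} (h : ∀ p ∈ l, u p.1 ≤ v p.1) :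
    (l.map fun p => (p.2 : ℝ) * u p.1).sum ≤ (l.map fun p => (p.2 : ℝ) * v p.1).sum :=
  List.sum_le_sum fun p hp => mul_le_mul_of_nonneg_left (h p hp) (Nat.cast_nonneg _)

lemma smallLaw_pos : ∀ k < 8, ∀ p ∈ smallLaw k, 1 ≤ p.1 := by
  decide +kernel

lemma cast_sum_map (l : List (ℕ × ℕ)) (G : ℕ → ℕ) :
    (((l.map fun p => p.2 * G p.1).sum : ℕ) : ℝ) = (l.map fun p => (p.2 : ℝ) * (G p.1 : ℝ)).sum := by
  induction l with
  | nil => simp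
  | cons a l ih => simp [ih]

lemma sum_map_mul (l : List (ℕ × ℕ)) (c : ℝ) (g : ℕ → ℝ) :
    (l.map fun p => (p.2 : ℝ) * (c * g p.1)).sum = c * (l.map fun p => (p.2 : ℝ) * g p.1).sum := by
  rw [← List.sum_map_mul_left]
  congr 2
  ext p
  ring

/-- An integer inequality for the law of size `k ≤ 7` implies a lower bound for `L k g / e ^ k`. Values
of `g` are rounded to multiples of `10 ^ (-24)`, the result is scaled by `10 ^ 12`, and `1 / e` is
replaced by its lower bound `0.367879441150`. -/
lemma small_lower (k : ℕ) (hk1 : 1 ≤ k) (hk : k ≤ 7) (g : ℕ → ℝ) (G : ℕ → ℕ)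
    (hG : ∀ x, 1 ≤ x → (G x : ℝ) ≤ 10 ^ 24 * g x) (a : ℕ)
    (ha : a * (k - 1).factorial * 10 ^ 24 * (10 ^ 12) ^ k ≤
      10 ^ 12 * 367879441150 ^ k * ((smallLaw k).map fun p => p.2 * G p.1).sum) :
    (a : ℝ) ≤ 10 ^ 12 * (L k g * Real.exp (-1) ^ k) := by
  have ha' : (a : ℝ) * (k - 1).factorial * 10 ^ 24 * (10 ^ 12) ^ k ≤
      10 ^ 12 * 367879441150 ^ k * (((smallLaw k).map fun p => p.2 * G p.1).sum : ℕ) := by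
    exact_mod_cast ha
  rw [cast_sum_map] at ha'
  have hle := sum_map_le_sum_map (l := smallLaw k) (u := fun x => (G x : ℝ))
    (v := fun x => 10 ^ 24 * g x) fun p hp => hG _ (smallLaw_pos k (by omega) p hp)
  rw [sum_map_mul, ← L_smallLaw k hk1 hk] at hle
  have hz : (367879441150 : ℝ) ^ k ≤ (10 ^ 12 * Real.exp (-1)) ^ k :=
    pow_le_pow_left₀ (by norm_num) exp_neg_one_bounds.1 k
  have hs0 : 0 ≤ ((smallLaw k).map fun p => (p.2 : ℝ) * (G p.1 : ℝ)).sum := by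
    rw [← cast_sum_map]; positivity
  have hf : (0 : ℝ) < (k - 1).factorial := by exact_mod_cast Nat.factorial_pos _
  have hmain := ha'.trans (mul_le_mul (mul_le_mul_of_nonneg_left hz (by positivity)) hle hs0
    (by positivity))
  rw [mul_pow] at hmain
  have hpos : (0 : ℝ) < (k - 1).factorial * 10 ^ 24 * (10 ^ 12) ^ k := by positivity
  refine le_of_mul_le_mul_right ?_ hpos
  calc _ = _ := by ring
    _ ≤ _ := hmain
    _ = _ := by ring

/-- The counterpart of `small_lower` for upper bounds, with `1 / e ≤ 0.367879441193`. -/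
lemma small_upper (k : ℕ) (hk1 : 1 ≤ k) (hk : k ≤ 7) (g : ℕ → ℝ) (G : ℕ → ℕ)
    (hg : ∀ x, 1 ≤ x → 0 ≤ g x)
    (hG : ∀ x, 1 ≤ x → 10 ^ 24 * g x ≤ (G x : ℝ)) (a : ℕ)
    (ha : 10 ^ 12 * 367879441193 ^ k * ((smallLaw k).map fun p => p.2 * G p.1).sum ≤
      a * (k - 1).factorial * 10 ^ 24 * (10 ^ 12) ^ k) :
    10 ^ 12 * (L k g * Real.exp (-1) ^ k) ≤ (a : ℝ) := by
  have ha' : 10 ^ 12 * 367879441193 ^ k * (((smallLaw k).map fun p => p.2 * G p.1).sum : ℕ) ≤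
      (a : ℝ) * (k - 1).factorial * 10 ^ 24 * (10 ^ 12) ^ k := by
    exact_mod_cast ha
  rw [cast_sum_map] at ha'
  have hle := sum_map_le_sum_map (l := smallLaw k) (v := fun x => (G x : ℝ))
    (u := fun x => 10 ^ 24 * g x) fun p hp => hG _ (smallLaw_pos k (by omega) p hp)
  rw [sum_map_mul, ← L_smallLaw k hk1 hk] at hle
  have hz : (10 ^ 12 * Real.exp (-1)) ^ k ≤ (367879441193 : ℝ) ^ k :=
    pow_le_pow_left₀ (by positivity) exp_neg_one_bounds.2 k
  have hL := L_nonneg k g hg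
  have hf : (0 : ℝ) < (k - 1).factorial := by exact_mod_cast Nat.factorial_pos _
  have hmain := (mul_le_mul (mul_le_mul_of_nonneg_left hz (by positivity : (0 : ℝ) ≤ 10 ^ 12)) hle
    (by positivity) (by positivity)).trans ha'
  rw [mul_pow] at hmain
  have hpos : (0 : ℝ) < (k - 1).factorial * 10 ^ 24 * (10 ^ 12) ^ k := by positivity
  refine le_of_mul_le_mul_right ?_ hpos
  calc _ = _ := by ring
    _ ≤ _ := hmain
    _ = _ := by ring

lemma floor_le (x j : ℕ) : ((10 ^ 24 / (1 + x) ^ j : ℕ) : ℝ) ≤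
    10 ^ 24 * (((1 + x : ℕ) : ℝ)⁻¹) ^ j := by
  refine Nat.cast_div_le.trans (le_of_eq ?_)
  push_cast
  rw [inv_pow, div_eq_mul_inv]
  norm_num

lemma le_floor_add_one (x j : ℕ) : 10 ^ 24 * (((1 + x : ℕ) : ℝ)⁻¹) ^ j ≤
    ((10 ^ 24 / (1 + x) ^ j + 1 : ℕ) : ℝ) := by
  have hpos : 0 < (1 + x) ^ j := by positivity
  rw [inv_pow, ← div_eq_mul_inv, div_le_iff₀ (by positivity)]
  have h := (Nat.lt_mul_div_succ (10 ^ 24) hpos).le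
  rw [mul_comm] at h
  exact_mod_cast h

lemma logLo_le (x : ℕ) (hx : 1 ≤ x) :
    (logLo x : ℝ) ≤ 10 ^ 24 * (Real.log (1 + x) - Real.log x) := by
  have hx0 : (0 : ℝ) < x := by exact_mod_cast hx
  have hs := Real.hasSum_log_one_add_inv hx0
  have h := sum_le_hasSum (Finset.range 10) (fun i _ => by positivity) hs
  have e : Real.log (1 + x) - Real.log x = Real.log (1 + (x : ℝ)⁻¹) := by
    rw [← Real.log_div (by positivity) hx0.ne', add_div, div_self hx0.ne', one_div, add_comm]
  rw [e]
  refine le_trans ?_ (mul_le_mul_of_nonneg_left h (by positivity))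
  rw [Finset.mul_sum]
  have e2 : logLo x = ∑ i ∈ Finset.range 10,
      2 * 10 ^ 24 / ((2 * i + 1) * (2 * x + 1) ^ (2 * i + 1)) := rfl
  rw [e2, Nat.cast_sum]
  refine Finset.sum_le_sum fun i _ => ?_
  refine Nat.cast_div_le.trans (le_of_eq ?_)
  push_cast
  rw [one_div_pow]
  field_simp
  norm_num

/-- The bounds for the shifted moments: from the exact law for `k ≤ 7`, and otherwise from the
moment bounds through `shiftMoment_alternating`, with an even number of terms for the lower bound
and an odd number for the upper bound. -/
lemma nBounds_of_mBounds (k : ℕ) (hk1 : 1 ≤ k)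
    (hM : ∀ j, 1 ≤ j → j < 7 → (mLo k j : ℝ) ≤ 10 ^ 12 * rootMoment j k ∧
      10 ^ 12 * rootMoment j k ≤ (mUp k j : ℝ)) (j : ℕ) (hj1 : 1 ≤ j) (hj : j < 7) :
    (nLo k j : ℝ) ≤ 10 ^ 12 * shiftMoment j k ∧ 10 ^ 12 * shiftMoment j k ≤ (nUp k j : ℝ) ∧
      0 ≤ nLo k j := by
  by_cases hk : k ≤ 7
  · simp only [nLo, nUp, hk, if_true]
    refine ⟨?_, ?_, by positivity⟩
    · have := small_lower k hk1 hk (fun x => (((1 + x : ℕ) : ℝ)⁻¹) ^ j) _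
        (fun x _ => floor_le x j) _ (check_nLo k (by omega) hk1 j hj hj1)
      rw [Int.cast_natCast]
      exact this
    · have := small_upper k hk1 hk (fun x => (((1 + x : ℕ) : ℝ)⁻¹) ^ j) _
        (fun x _ => by positivity)
        (fun x _ => le_floor_add_one x j) _ (check_nUp k (by omega) hk1 j hj hj1)
      rw [Int.cast_natCast]
      exact this
  · simp only [nLo, nUp, hk, if_false]
    obtain ⟨j, rfl⟩ : ∃ i, j = i + 1 := ⟨j - 1, by omega⟩
    refine ⟨?_, ?_, le_max_left _ _⟩
    · rw [Int.cast_max]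
      refine max_le ?_ ?_
      · have := shiftMoment_nonneg (j + 1) k
        push_cast
        positivity
      · have h := shiftMoment_alternating j k (2 * ((7 - (j + 1)) / 2))
        rw [Even.neg_one_pow (even_two_mul _), one_mul, sub_nonneg] at h
        refine le_trans ?_ (mul_le_mul_of_nonneg_left h (by positivity))
        push_cast
        rw [Finset.mul_sum]
        refine Finset.sum_le_sum fun i hi => ?_
        have hi' : j + 1 + i < 7 := by rw [Finset.mem_range] at hi; omega
        obtain ⟨h1, h2⟩ := hM (j + 1 + i) (by omega) hi'
        have hc : (0 : ℝ) ≤ ((j + i).choose i : ℝ) := by positivity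
        split_ifs with hpar
        · rw [Even.neg_one_pow (Nat.even_iff.2 hpar)]
          nlinarith [mul_le_mul_of_nonneg_left h1 hc]
        · rw [Odd.neg_one_pow (Nat.not_even_iff_odd.1 (by rwa [Nat.even_iff]))]
          nlinarith [mul_le_mul_of_nonneg_left h2 hc]
    · have h := shiftMoment_alternating j k (2 * ((6 - (j + 1)) / 2) + 1)
      rw [Odd.neg_one_pow (odd_two_mul_add_one _), neg_one_mul, Left.nonneg_neg_iff, sub_nonpos] at h
      refine le_trans (mul_le_mul_of_nonneg_left h (by positivity)) ?_
      push_cast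
      rw [Finset.mul_sum]
      refine Finset.sum_le_sum fun i hi => ?_
      have hi' : j + 1 + i < 7 := by rw [Finset.mem_range] at hi; omega
      obtain ⟨h1, h2⟩ := hM (j + 1 + i) (by omega) hi'
      have hc : (0 : ℝ) ≤ ((j + i).choose i : ℝ) := by positivity
      split_ifs with hpar
      · rw [Even.neg_one_pow (Nat.even_iff.2 hpar)]
        nlinarith [mul_le_mul_of_nonneg_left h2 hc]
      · rw [Odd.neg_one_pow (Nat.not_even_iff_odd.1 (by rwa [Nat.even_iff]))]
        nlinarith [mul_le_mul_of_nonneg_left h1 hc]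

/-- The tabulated moment bounds are correct, by induction along `rootMoment_succ`. -/
lemma mBounds (k : ℕ) (hk1 : 1 ≤ k) (hk : k ≤ 28) : ∀ j, 1 ≤ j → j < 7 →
    (mLo k j : ℝ) ≤ 10 ^ 12 * rootMoment j k ∧ 10 ^ 12 * rootMoment j k ≤ (mUp k j : ℝ) := by
  induction k using Nat.strong_induction_on with
  | _ k ih =>
    intro j hj1 hj
    match k with
    | 0 => omega
    | 1 =>
      obtain ⟨h1, h2⟩ := check_one j hj hj1
      rw [h1, h2]
      have := exp_neg_one_bounds
      simpa [rootMoment, L_one] using this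
    | k + 2 =>
      have hrec := rootMoment_succ j k
      have hlo := check_lo k (by omega) j hj hj1
      have hup := check_up k (by omega) j hj hj1
      have hlo' : ((k : ℝ) + 1) * mLo (k + 2) j * 10 ^ 12 ≤
        ∑ i ∈ Finset.range (k + 1), ((i : ℝ) + 1) * nLo (i + 1) j * mLo (k + 1 - i) j := by
        exact_mod_cast hlo
      have hup' : ∑ i ∈ Finset.range (k + 1), ((i : ℝ) + 1) * nUp (i + 1) j * mUp (k + 1 - i) j ≤
        ((k : ℝ) + 1) * mUp (k + 2) j * 10 ^ 12 := by
        exact_mod_cast hup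
      have hscale : ((k : ℝ) + 1) * (10 ^ 12 * rootMoment j (k + 2)) * 10 ^ 12 =
          ∑ i ∈ Finset.range (k + 1), ((i : ℝ) + 1) * (10 ^ 12 * shiftMoment j (i + 1)) *
            (10 ^ 12 * rootMoment j (k + 1 - i)) := by
        calc _ = ((k + 1) * rootMoment j (k + 2)) * (10 ^ 12 * 10 ^ 12) := by ring
          _ = _ := by
            rw [hrec, Finset.sum_mul]
            refine Finset.sum_congr rfl fun i _ => ?_
            ring
      have hfac : (0 : ℝ) < ((k : ℝ) + 1) * 10 ^ 12 := by positivity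
      constructor
      · refine le_of_mul_le_mul_left ?_ hfac
        calc _ = ((k : ℝ) + 1) * mLo (k + 2) j * 10 ^ 12 := by ring
          _ ≤ _ := hlo'
          _ ≤ ((k : ℝ) + 1) * (10 ^ 12 * rootMoment j (k + 2)) * 10 ^ 12 := by
            rw [hscale]
            refine Finset.sum_le_sum fun i hi => ?_
            have hi : i ≤ k := by simpa [Nat.lt_succ_iff] using hi
            obtain ⟨hn1, -, -⟩ := nBounds_of_mBounds (i + 1) (by omega)
              (ih (i + 1) (by omega) (by omega) (by omega)) j hj1 hj
            have hm1 := (ih (k + 1 - i) (by omega) (by omega) (by omega) j hj1 hj).1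
            have hm0 : (0 : ℝ) ≤ mLo (k + 1 - i) j := by simp [mLo]
            have hs0 := shiftMoment_nonneg j (i + 1)
            gcongr
          _ = _ := by ring
      · refine le_of_mul_le_mul_left ?_ hfac
        calc _ = ((k : ℝ) + 1) * (10 ^ 12 * rootMoment j (k + 2)) * 10 ^ 12 := by ring
          _ ≤ ∑ i ∈ Finset.range (k + 1), ((i : ℝ) + 1) * nUp (i + 1) j * mUp (k + 1 - i) j := by
            rw [hscale]
            refine Finset.sum_le_sum fun i hi => ?_
            have hi : i ≤ k := by simpa [Nat.lt_succ_iff] using hi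
            obtain ⟨-, hn1, -⟩ := nBounds_of_mBounds (i + 1) (by omega)
              (ih (i + 1) (by omega) (by omega) (by omega)) j hj1 hj
            have hm1 := (ih (k + 1 - i) (by omega) (by omega) (by omega) j hj1 hj).2
            have hs0 := shiftMoment_nonneg j (i + 1)
            have hr0 := rootMoment_nonneg j (k + 1 - i)
            have hn0 : (0 : ℝ) ≤ nUp (i + 1) j := le_trans (by positivity) hn1
            gcongr
          _ ≤ _ := hup'
          _ = _ := by ring

lemma truncated_mean_gt : (0.349284 : ℝ) < ∑ k ∈ Finset.range 28,
    L (k + 1) (fun x => Real.log (1 + x) - Real.log x) * Real.exp (-1) ^ (k + 1) := by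
  have h := check_total
  have h' : (60 * 349284000000 : ℝ) <
      60 * (∑ k ∈ Finset.range 7, (logTable.getD (k + 1) 0 : ℝ)) +
      ∑ k ∈ Finset.range 21, ((60 : ℝ) * mLo (k + 8) 1 - 30 * mUp (k + 8) 2 + 20 * mLo (k + 8) 3 -
        15 * mUp (k + 8) 4 + 12 * mLo (k + 8) 5 - 10 * mUp (k + 8) 6) := by
    exact_mod_cast h
  have hsmall : ∑ k ∈ Finset.range 7, (logTable.getD (k + 1) 0 : ℝ) ≤ ∑ k ∈ Finset.range 7,
      10 ^ 12 * (L (k + 1) (fun x => Real.log (1 + x) - Real.log x) * Real.exp (-1) ^ (k + 1)) := by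
    refine Finset.sum_le_sum fun k hk => ?_
    rw [Finset.mem_range] at hk
    exact small_lower (k + 1) (by omega) (by omega) _ logLo logLo_le _
      (check_log (k + 1) (by omega) (by omega))
  have hlarge : ∑ k ∈ Finset.range 21, ((60 : ℝ) * mLo (k + 8) 1 - 30 * mUp (k + 8) 2 +
      20 * mLo (k + 8) 3 - 15 * mUp (k + 8) 4 + 12 * mLo (k + 8) 5 - 10 * mUp (k + 8) 6) ≤
      ∑ k ∈ Finset.range 21, 60 * (10 ^ 12 *
        (L (k + 8) (fun x => Real.log (1 + x) - Real.log x) * Real.exp (-1) ^ (k + 8))) := by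
    refine Finset.sum_le_sum fun k hk => ?_
    rw [Finset.mem_range] at hk
    have hM := mBounds (k + 8) (by omega) (by omega)
    have h1 := (hM 1 (by omega) (by omega)).1
    have h2 := (hM 2 (by omega) (by omega)).2
    have h3 := (hM 3 (by omega) (by omega)).1
    have h4 := (hM 4 (by omega) (by omega)).2
    have h5 := (hM 5 (by omega) (by omega)).1
    have h6 := (hM 6 (by omega) (by omega)).2
    have hl := L_log_ge (k + 8)
    linarith
  rw [← Finset.mul_sum] at hsmall hlarge
  rw [← Finset.mul_sum] at hlarge
  rw [show 28 = 7 + 21 from rfl, Finset.sum_range_add]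
  have e : ∑ k ∈ Finset.range 21,
      L (7 + k + 1) (fun x => Real.log (1 + x) - Real.log x) * Real.exp (-1) ^ (7 + k + 1) =
      ∑ k ∈ Finset.range 21,
      L (k + 8) (fun x => Real.log (1 + x) - Real.log x) * Real.exp (-1) ^ (k + 8) := by
    refine Finset.sum_congr rfl fun k _ => ?_
    rw [show 7 + k + 1 = k + 8 by ring]
  rw [e]
  linarith

lemma base_lt_exp : (1.41805 : ℝ) < Real.exp 0.349284 := by
  refine lt_of_lt_of_le ?_ (Real.sum_le_exp_of_nonneg (by norm_num) 10)
  norm_num [Finset.sum_range_succ, Nat.factorial]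

/-! ### Codes of rooted labelled trees -/

/-- A rooted labelled tree written as a binary expression: `leaf r` is the one-vertex tree with
root `r`, and `graft a b` joins the root of `a` to the root of `b`, keeping the root of `b`. -/
inductive Code (V : Type) : Type
  | leaf (r : V) : Code V
  | graft (a b : Code V) : Code V

namespace Code

variable {V : Type}

/-- The root of the tree described by a code. -/
def root : Code V → V
  | leaf r => r
  | graft _ b => b.root

/-- The number of subtrees that contain the root. -/
def val : Code V → ℕ
  | leaf _ => 1
  | graft a b => (1 + a.val) * b.val

/-- The edges of the tree described by a code. -/
def edges : Code V → Set (Sym2 V)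
  | leaf _ => ∅
  | graft a b => insert s(a.root, b.root) (a.edges ∪ b.edges)

end Code

variable {V : Type}

/-- The total weight `∑ g (val t)` over a multiset of codes, as an additive map. -/
noncomputable def weight (g : ℕ → ℝ) : Multiset (Code V) →+ ℝ :=
  Multiset.sumAddMonoidHom.comp (Multiset.mapAddMonoidHom fun t => g t.val)

lemma weight_apply (g : ℕ → ℝ) (s : Multiset (Code V)) :
    weight g s = (s.map fun t => g t.val).sum := rfl

lemma weight_bind (g : ℕ → ℝ) (s t : Multiset (Code V)) :
    weight g (s.bind fun x => t.map (Code.graft x)) =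
      weight (fun x => weight (fun y => g ((1 + x) * y)) t) s := by
  simp only [weight_apply, Multiset.map_bind, Multiset.sum_bind, Multiset.map_map]
  rfl

variable [LinearOrder V]

/-- The canonical codes of the trees on the vertex set `S` with root `r`: the grafted branch is
always the one that contains the least vertex `m ≠ r`, so it has vertex set `insert m B` for some
`B ⊆ S \ {r, m}`, and a root `a` of its own. The first argument bounds the recursion depth. -/
noncomputable def codes : ℕ → Finset V → V → Multiset (Code V)
  | 0, _, _ => 0
  | k + 1, S, r =>
    if h : (S.erase r).Nonempty then
      ∑ B ∈ ((S.erase r).erase ((S.erase r).min' h)).powerset,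
        ∑ a ∈ insert ((S.erase r).min' h) B,
          (codes k (insert ((S.erase r).min' h) B) a).bind fun x =>
            (codes k (S \ insert ((S.erase r).min' h) B) r).map (Code.graft x)
    else {Code.leaf r}

/-- The weight of the codes on the vertex set `S` is given by the functional `L S.card`, provided the
recursion depth `k` suffices. -/
lemma weight_codes (k : ℕ) : ∀ (S : Finset V) (r : V) (g : ℕ → ℝ), r ∈ S → S.card ≤ k →
    weight g (codes k S r) = (S.card - 1).factorial * L S.card g := by
  induction k with
  | zero =>
    intro S r g hr hS
    have := Finset.card_pos.2 ⟨r, hr⟩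
    omega
  | succ k ih =>
    intro S r g hr hS
    rw [codes]
    have hcard := Finset.card_erase_of_mem hr
    split_ifs with h
    · set m := (S.erase r).min' h with hm
      have hmS : m ∈ S.erase r := Finset.min'_mem _ _
      have hcard2 := Finset.card_erase_of_mem hmS
      have hpos := Finset.card_pos.2 ⟨m, hmS⟩
      obtain ⟨j, hj⟩ : ∃ j, S.card = j + 2 := ⟨S.card - 2, by omega⟩
      have hj2 : ((S.erase r).erase m).card = j := by omega
      rw [map_sum]
      obtain ⟨φ, hφ⟩ : ∃ φ : ℕ → ℝ, ∀ i : ℕ, φ i = (i + 1) * (i.factorial * (j - i).factorial) *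
          L (i + 1) (fun x => L (j + 1 - i) (fun y => g ((1 + x) * y))) := ⟨_, fun _ => rfl⟩
      have hterm : ∀ B ∈ ((S.erase r).erase m).powerset,
          weight g (∑ a ∈ insert m B, (codes k (insert m B) a).bind fun x =>
            (codes k (S \ insert m B) r).map (Code.graft x)) =
          φ B.card := by
        intro B hB
        rw [Finset.mem_powerset] at hB
        have hmB : m ∉ B := fun hh => by simpa using hB hh
        have hrB : r ∉ insert m B := by
          rw [Finset.mem_insert, not_or]
          exact ⟨fun e => by simp [← e] at hmS, fun hh => by simpa using hB hh⟩
        have hA : (insert m B).card = B.card + 1 := Finset.card_insert_of_notMem hmB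
        have hAS : insert m B ⊆ S := by
          refine Finset.insert_subset (Finset.mem_of_mem_erase hmS) fun u hu => ?_
          exact Finset.mem_of_mem_erase (Finset.mem_of_mem_erase (hB hu))
        have hBj : B.card ≤ j := hj2 ▸ Finset.card_le_card hB
        have hC : (S \ insert m B).card = j + 1 - B.card := by
          rw [Finset.card_sdiff_of_subset hAS, hA, hj]; omega
        rw [map_sum]
        have hin : ∀ a ∈ insert m B, weight g ((codes k (insert m B) a).bind fun x =>
            (codes k (S \ insert m B) r).map (Code.graft x)) =
            (B.card.factorial * (j - B.card).factorial) * L (B.card + 1)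
            (fun x => L (j + 1 - B.card) (fun y => g ((1 + x) * y))) := by
          intro a ha
          rw [weight_bind, ih _ a _ ha (by omega), hA, Nat.add_sub_cancel, mul_assoc]
          congr 1
          rw [← L_smul]
          refine L_congr _ fun x _ => ?_
          rw [ih _ r _ (Finset.mem_sdiff.2 ⟨hr, hrB⟩) (by omega), hC]
          congr 3
          omega
        rw [Finset.sum_congr rfl hin, Finset.sum_const, hA, nsmul_eq_mul, hφ]
        push_cast
        ring
      rw [Finset.sum_congr rfl hterm, Finset.sum_powerset_apply_card, hj2, hj, L_succ,
        show j + 2 - 1 = j + 1 by omega, Nat.factorial_succ]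
      push_cast
      field_simp
      rw [Finset.mul_sum]
      refine Finset.sum_congr rfl fun i hi => ?_
      have hi : i ≤ j := by simpa [Nat.lt_succ_iff] using hi
      rw [nsmul_eq_mul, hφ, ← Nat.choose_mul_factorial_mul_factorial hi]
      push_cast
      ring
    · have h1 : S.card = 1 := by
        rw [Finset.not_nonempty_iff_eq_empty] at h
        rw [h] at hcard
        have := Finset.card_pos.2 ⟨r, hr⟩
        simp at hcard
        omega
      rw [h1, L_one]
      simp [weight_apply, Code.val]

lemma root_of_mem_codes (k : ℕ) : ∀ (S : Finset V) (r : V) (t : Code V),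
    t ∈ codes k S r → t.root = r := by
  induction k with
  | zero => intro S r t ht; simp [codes] at ht
  | succ k ih =>
    intro S r t ht
    rw [codes] at ht
    split_ifs at ht with h
    · simp only [Multiset.mem_sum, Multiset.mem_bind, Multiset.mem_map] at ht
      obtain ⟨B, -, a, -, x, -, y, hy, rfl⟩ := ht
      exact ih _ _ y hy
    · rw [Multiset.mem_singleton] at ht
      rw [ht, Code.root]

/-- A code with vertex set `S` produces `val t` subsets of `S`, all containing the root and all
connected in every graph that has the edges of the code. -/
lemma exists_subtrees (k : ℕ) : ∀ (S : Finset V) (r : V) (t : Code V), r ∈ S →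
    t ∈ codes k S r → ∃ F : Finset (Finset V), F.card = t.val ∧ ∀ A ∈ F, r ∈ A ∧ A ⊆ S ∧
      ∀ G : SimpleGraph V, t.edges ⊆ G.edgeSet → (G.induce (A : Set V)).Connected := by
  induction k with
  | zero => intro S r t _ ht; simp [codes] at ht
  | succ k ih =>
    intro S r t hr ht
    rw [codes] at ht
    split_ifs at ht with h
    · set m := (S.erase r).min' h with hm
      have hmS : m ∈ S.erase r := Finset.min'_mem _ _
      simp only [Multiset.mem_sum, Multiset.mem_bind, Multiset.mem_map] at ht
      obtain ⟨B, hB, a, ha, x, hx, y, hy, rfl⟩ := ht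
      rw [Finset.mem_powerset] at hB
      have hrB : r ∉ insert m B := by
        rw [Finset.mem_insert, not_or]
        exact ⟨fun e => by simp [← e] at hmS, fun hh => by simpa using hB hh⟩
      have hAS : insert m B ⊆ S := by
        refine Finset.insert_subset (Finset.mem_of_mem_erase hmS) fun u hu => ?_
        exact Finset.mem_of_mem_erase (Finset.mem_of_mem_erase (hB hu))
      obtain ⟨F₁, hc₁, h₁⟩ := ih _ a x ha hx
      obtain ⟨F₂, hc₂, h₂⟩ := ih _ r y (Finset.mem_sdiff.2 ⟨hr, hrB⟩) hy
      have hdisj : ∀ P ∈ F₁, ∀ Q ∈ F₂, Disjoint P Q := fun P hP Q hQ =>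
        Finset.disjoint_of_subset_left (h₁ P hP).2.1
          (Finset.disjoint_of_subset_right (h₂ Q hQ).2.1 Finset.disjoint_sdiff)
      have hrx := root_of_mem_codes _ _ _ _ hx
      have hry := root_of_mem_codes _ _ _ _ hy
      refine ⟨F₂ ∪ (F₁ ×ˢ F₂).image fun P => P.1 ∪ P.2, ?_, ?_⟩
      · have hsplit : ∀ P ∈ F₁, ∀ Q ∈ F₂, (P ∪ Q) ∩ insert m B = P ∧
            (P ∪ Q) \ insert m B = Q := by
          intro P hP Q hQ
          have hPs := (h₁ P hP).2.1
          have hQs := (h₂ Q hQ).2.1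
          constructor
          · ext u
            have e1 := @hPs u
            have e2 := @hQs u
            simp only [Finset.mem_inter, Finset.mem_union, Finset.mem_sdiff] at *
            tauto
          · ext u
            have e1 := @hPs u
            have e2 := @hQs u
            simp only [Finset.mem_union, Finset.mem_sdiff] at *
            tauto
        rw [Finset.card_union_of_disjoint, Finset.card_image_of_injOn, Finset.card_product, hc₁, hc₂]
        · simp only [Code.val]; ring
        · rintro ⟨P, Q⟩ hPQ ⟨P', Q'⟩ hPQ' e
          simp only [Finset.coe_product, Set.mem_prod, Finset.mem_coe] at hPQ hPQ' e
          obtain ⟨e1, e2⟩ := hsplit P hPQ.1 Q hPQ.2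
          obtain ⟨e3, e4⟩ := hsplit P' hPQ'.1 Q' hPQ'.2
          rw [e] at e1 e2
          rw [← e1, ← e2, e3, e4]
        · rw [Finset.disjoint_left]
          rintro Q hQ hQ'
          simp only [Finset.mem_image, Finset.mem_product, Prod.exists] at hQ'
          obtain ⟨P, Q', ⟨hP, hQ'⟩, rfl⟩ := hQ'
          have haP := (h₁ P hP).1
          have := (h₂ _ hQ).2.1 (Finset.mem_union_left _ haP)
          rw [Finset.mem_sdiff] at this
          exact this.2 ha
      · intro A hA
        simp only [Finset.mem_union, Finset.mem_image, Finset.mem_product, Prod.exists] at hA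
        rcases hA with hA | ⟨P, Q, ⟨hP, hQ⟩, rfl⟩
        · obtain ⟨g1, g2, g3⟩ := h₂ A hA
          refine ⟨g1, g2.trans Finset.sdiff_subset, fun G hG => g3 G ?_⟩
          exact fun e he => hG (Set.mem_insert_of_mem _ (Set.mem_union_right _ he))
        · obtain ⟨g1, g2, g3⟩ := h₁ P hP
          obtain ⟨k1, k2, k3⟩ := h₂ Q hQ
          refine ⟨Finset.mem_union_right _ k1,
            Finset.union_subset (g2.trans hAS) (k2.trans Finset.sdiff_subset), fun G hG => ?_⟩
          have hadj : G.Adj a r := by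
            rw [← SimpleGraph.mem_edgeSet]
            apply hG
            rw [Code.edges, hrx, hry]
            exact Set.mem_insert _ _
          rw [Finset.coe_union]
          refine SimpleGraph.connected_induce_union (SimpleGraph.Connected.preconnected ?_) (SimpleGraph.Connected.preconnected ?_)
            g1 k1 hadj
          · exact g3 G fun e he => hG (Set.mem_insert_of_mem _ (Set.mem_union_left _ he))
          · exact k3 G fun e he => hG (Set.mem_insert_of_mem _ (Set.mem_union_right _ he))
    · rw [Multiset.mem_singleton] at ht
      subst ht
      refine ⟨{{r}}, by simp [Code.val], ?_⟩
      intro A hA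
      rw [Finset.mem_singleton] at hA
      subst hA
      refine ⟨by simp, by simpa using hr, fun G _ => ?_⟩
      rw [Finset.coe_singleton]
      exact SimpleGraph.Connected.of_subsingleton

/-- A set `S` that is closed under a parent map `p` up to the vertex `r`, along which the rank `d`
decreases, is the vertex set of a tree with root `r`; this tree has a canonical code. -/
lemma exists_code (p : V → V) (d : V → ℕ) (hd : ∀ u, d (p u) ≤ d u) (k : ℕ) :
    ∀ (S : Finset V) (r : V), r ∈ S → S.card ≤ k →
      (∀ u ∈ S, u ≠ r → p u ∈ S ∧ d (p u) < d u) →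
      ∃ t ∈ codes k S r, t.edges = (fun u => s(u, p u)) '' ((S : Set V) \ {r}) := by
  classical
  have hiter : ∀ i u, d (p^[i] u) ≤ d u := by
    intro i
    induction i with
    | zero => simp
    | succ i ih => intro u; rw [Function.iterate_succ_apply']; exact (hd _).trans (ih u)
  induction k with
  | zero =>
    intro S r hr hS
    have := Finset.card_pos.2 ⟨r, hr⟩
    omega
  | succ k ih =>
    intro S r hr hS hp
    rw [codes]
    split_ifs with h
    · set m := (S.erase r).min' h with hm
      have hmS : m ∈ S.erase r := Finset.min'_mem _ _
      -- `a` is the ancestor of `m` just below `r`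
      have hanc : ∀ N, ∀ u ∈ S, u ≠ r → d u ≤ N →
          ∃ a ∈ S, a ≠ r ∧ p a = r ∧ ∃ i, p^[i] u = a := by
        intro N
        induction N with
        | zero =>
          intro u hu hur hN
          have := (hp u hu hur).2
          omega
        | succ N ihN =>
          intro u hu hur hN
          by_cases hpu : p u = r
          · exact ⟨u, hu, hur, hpu, 0, rfl⟩
          · obtain ⟨h1, h2⟩ := hp u hu hur
            obtain ⟨a, ha, har, hpa, i, hi⟩ := ihN (p u) h1 hpu (by omega)
            exact ⟨a, ha, har, hpa, i + 1, hi⟩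
      obtain ⟨a, haS, har, hpa, i₀, hi₀⟩ := hanc (d m) m (Finset.mem_of_mem_erase hmS)
        (Finset.ne_of_mem_erase hmS) le_rfl
      set A := S.filter fun u => ∃ i, p^[i] u = a with hA
      have haA : a ∈ A := Finset.mem_filter.2 ⟨haS, 0, rfl⟩
      have hmA : m ∈ A := Finset.mem_filter.2 ⟨Finset.mem_of_mem_erase hmS, i₀, hi₀⟩
      have hrA : r ∉ A := by
        intro hh
        obtain ⟨-, i, hi⟩ := Finset.mem_filter.1 hh
        have h1 := hiter i r
        have h2 := (hp a haS har).2
        rw [hi] at h1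
        rw [hpa] at h2
        omega
      have hAS : A ⊆ S := Finset.filter_subset _ _
      have hins : insert m (A.erase m) = A := Finset.insert_erase hmA
      have hcA : A.card < S.card := Finset.card_lt_card ⟨hAS, fun hh => hrA (hh hr)⟩
      have hcB : (S \ A).card < S.card :=
        Finset.card_lt_card ⟨Finset.sdiff_subset, fun hh => (Finset.mem_sdiff.1 (hh haS)).2 haA⟩
      obtain ⟨x, hx, hxe⟩ := ih A a haA (by omega) (by
        intro u hu hua
        obtain ⟨huS, i, hi⟩ := Finset.mem_filter.1 hu
        obtain ⟨h1, h2⟩ := hp u huS fun e => hrA (e ▸ hu)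
        refine ⟨Finset.mem_filter.2 ⟨h1, ?_⟩, h2⟩
        cases i with
        | zero => exact absurd hi hua
        | succ i => exact ⟨i, hi⟩)
      obtain ⟨y, hy, hye⟩ := ih (S \ A) r (Finset.mem_sdiff.2 ⟨hr, hrA⟩) (by omega) (by
        intro u hu hur
        obtain ⟨huS, huA⟩ := Finset.mem_sdiff.1 hu
        obtain ⟨h1, h2⟩ := hp u huS hur
        refine ⟨Finset.mem_sdiff.2 ⟨h1, fun hh => huA ?_⟩, h2⟩
        obtain ⟨-, i, hi⟩ := Finset.mem_filter.1 hh
        exact Finset.mem_filter.2 ⟨huS, i + 1, hi⟩)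
      refine ⟨Code.graft x y, ?_, ?_⟩
      · simp only [Multiset.mem_sum, Multiset.mem_bind, Multiset.mem_map, Finset.mem_powerset]
        refine ⟨A.erase m, ?_, a, by rwa [hins], x, by rwa [hins], y, by rwa [hins], rfl⟩
        refine Finset.erase_subset_erase m fun u hu => Finset.mem_erase.2 ⟨?_, hAS hu⟩
        exact fun e => hrA (e ▸ hu)
      · rw [Code.edges, hxe, hye, root_of_mem_codes _ _ _ _ hx, root_of_mem_codes _ _ _ _ hy,
          ← Set.image_union]
        have e1 : (S : Set V) \ {r} =
            insert a (((A : Set V) \ {a}) ∪ (((S \ A : Finset V) : Set V) \ {r})) := by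
          ext u
          have h1 : u ∈ A → u ∈ S := fun h => hAS h
          have h2 : u ∈ A → u ≠ r := fun hu e => hrA (e ▸ hu)
          have h3 : u = a → u ∈ A := fun e => e ▸ haA
          simp only [Set.mem_sdiff, Finset.mem_coe, Set.mem_singleton_iff, Set.mem_insert_iff,
            Set.mem_union, Finset.mem_sdiff]
          tauto
        rw [e1, Set.image_insert_eq, hpa]
    · refine ⟨_, Multiset.mem_singleton_self _, ?_⟩
      rw [Finset.not_nonempty_iff_eq_empty] at h
      rw [← Finset.coe_erase, h]
      simp [Code.edges]

/-- A tree with a chosen root `r` is given by the parent map towards `r`, which decreases the distance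
to `r`; the counts of vertices and edges show that every edge joins a vertex to its parent. -/
lemma exists_parent {W : Type} [Fintype W] (G : SimpleGraph W) (hG : G.IsTree) (r : W) :
    ∃ (p : W → W) (d : W → ℕ), (∀ u, d (p u) ≤ d u) ∧ (∀ u, u ≠ r → d (p u) < d u) ∧
      G.edgeSet = (fun u => s(u, p u)) '' (Set.univ \ {r}) := by
  classical
  have hex : ∀ u, ∃ v, (u ≠ r → G.Adj u v ∧ G.dist v r < G.dist u r) ∧ (u = r → v = r) := by
    intro u
    by_cases hu : u = r
    · exact ⟨r, fun h => absurd hu h, fun _ => rfl⟩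
    · obtain ⟨w, hw⟩ := (hG.connected u r).exists_walk_length_eq_dist
      cases w with
      | nil => exact absurd rfl hu
      | cons hadj w =>
        refine ⟨_, fun _ => ⟨hadj, ?_⟩, fun h => absurd h hu⟩
        rw [← hw, SimpleGraph.Walk.length_cons]
        exact Nat.lt_succ_of_le (SimpleGraph.dist_le w)
  choose p hp hpr using hex
  refine ⟨p, fun u => G.dist u r, fun u => ?_, fun u hu => (hp u hu).2, ?_⟩
  · by_cases hu : u = r
    · rw [hpr u hu, hu]
    · exact (hp u hu).2.le
  · symm
    have hinj : Set.InjOn (fun u => s(u, p u)) (Set.univ \ {r}) := by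
      intro u hu v hv e
      have h1 := (hp u (by simpa using hu)).2
      have h2 := (hp v (by simpa using hv)).2
      rw [Sym2.eq_iff] at e
      rcases e with ⟨e, -⟩ | ⟨e1, e2⟩
      · exact e
      · rw [e2] at h1
        rw [← e1] at h2
        omega
    refine Set.eq_of_subset_of_ncard_le ?_ ?_ (Set.toFinite _)
    · rintro _ ⟨u, hu, rfl⟩
      exact (hp u (by simpa using hu)).1
    · rw [hinj.ncard_image, Set.ncard_sdiff_singleton_of_mem (Set.mem_univ r),
        Set.ncard_univ, Nat.card_eq_fintype_card, ← hG.card_edgeFinset,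
        ← SimpleGraph.coe_edgeFinset, Set.ncard_coe_finset]
      simp

lemma Code.val_pos {W : Type} (t : Code W) : 1 ≤ t.val := by
  induction t with
  | leaf r => exact le_rfl
  | graft a b iha ihb => exact Nat.mul_pos (by omega) ihb

/-- A lower bound `v` for the number of subtrees, whose distribution over the labelled trees is
controlled by `L`. -/
lemma exists_lower_statistic (n : ℕ) : ∃ v : SimpleGraph (Fin (n + 1)) → ℕ,
    (∀ G, G.IsTree → 1 ≤ v G ∧ v G ≤ subtreeCount G) ∧
    ∀ (g : ℕ → ℝ), (∀ x, 0 ≤ g x) → ∀ F : Finset (SimpleGraph (Fin (n + 1))),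
      (∀ G ∈ F, G.IsTree) → ∑ G ∈ F, g (v G) ≤ n.factorial * L (n + 1) g := by
  classical
  have hex : ∀ G : SimpleGraph (Fin (n + 1)), ∃ t : Code (Fin (n + 1)), G.IsTree →
      t ∈ codes (n + 1) Finset.univ 0 ∧ t.edges = G.edgeSet := by
    intro G
    by_cases hG : G.IsTree
    · obtain ⟨p, d, h1, h2, h3⟩ := exists_parent G hG 0
      obtain ⟨t, ht, hte⟩ := exists_code p d h1 (n + 1) Finset.univ 0 (Finset.mem_univ _) (by simp)
        fun u _ hu => ⟨Finset.mem_univ _, h2 u hu⟩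
      exact ⟨t, fun _ => ⟨ht, by rw [hte, h3, Finset.coe_univ]⟩⟩
    · exact ⟨Code.leaf 0, fun h => absurd h hG⟩
  choose t ht using hex
  refine ⟨fun G => (t G).val, fun G hG => ⟨Code.val_pos _, ?_⟩, fun g hg F hF => ?_⟩
  · obtain ⟨F, hF, hFG⟩ := exists_subtrees _ _ _ _ (Finset.mem_univ _) (ht G hG).1
    change (t G).val ≤ _
    rw [← hF, ← Fintype.card_coe, ← Nat.card_eq_fintype_card]
    refine Nat.card_le_card_of_injective
      (fun A => ⟨(A.1 : Set (Fin (n + 1))), (hFG A.1 A.2).2.2 G (ht G hG).2.le⟩) ?_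
    intro A B hAB
    exact Subtype.ext (Finset.coe_injective (congrArg Subtype.val hAB))
  · have hinj : Set.InjOn t F := by
      intro G hG H hH e
      have h1 := (ht G (hF G hG)).2
      have h2 := (ht H (hF H hH)).2
      rw [e, h2] at h1
      exact (SimpleGraph.edgeSet_injective h1).symm
    rw [← Finset.sum_image (f := fun t : Code (Fin (n + 1)) => g t.val) hinj]
    have hw := weight_codes (n + 1) (Finset.univ : Finset (Fin (n + 1))) 0 g (Finset.mem_univ _)
      (by simp)
    rw [Finset.card_univ, Fintype.card_fin, Nat.add_sub_cancel] at hw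
    rw [← hw, weight_apply, ← Finset.sum_map_val]
    obtain ⟨w, hw⟩ := Multiset.le_iff_exists_add.1 (show (F.image t).val ≤
        codes (n + 1) Finset.univ 0 from (Multiset.le_iff_subset (F.image t).nodup).2 (by
      intro c hc
      obtain ⟨G, hG, rfl⟩ := Finset.mem_image.1 hc
      exact (ht G (hF G hG)).1))
    rw [hw, Multiset.map_add, Multiset.sum_add]
    refine le_add_of_nonneg_right (Multiset.sum_nonneg fun x hx => ?_)
    obtain ⟨c, -, rfl⟩ := Multiset.mem_map.1 hx
    exact hg _

/-! ### A lower bound for the number of labelled trees -/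

/-- A partial parent map without cycles, that is, a rooted forest; its roots are the vertices
with value `none`. -/
def IsForest {W : Type} (p : W → Option W) : Prop :=
  ∃ d : W → ℕ, ∀ u v, p u = some v → d v < d u

/-- The map `ρ` that sends every vertex to the root of its tree. -/
lemma IsForest.exists_root {W : Type} {p : W → Option W} (hp : IsForest p) :
    ∃ ρ : W → W, (∀ u, p (ρ u) = none) ∧ (∀ u v, p u = some v → ρ u = ρ v) ∧
      ∀ u, p u = none → ρ u = u := by
  obtain ⟨d, hd⟩ := hp
  have hex : ∀ N u, d u ≤ N → ∃ r, p r = none ∧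
      Relation.ReflTransGen (fun a b => p a = some b) u r := by
    intro N
    induction N with
    | zero =>
      intro u hu
      refine ⟨u, ?_, .refl⟩
      rcases h : p u with _ | v
      · rfl
      · have := hd u v h
        omega
    | succ N ih =>
      intro u hu
      rcases h : p u with _ | v
      · exact ⟨u, h, .refl⟩
      · obtain ⟨r, hr, hur⟩ := ih v (by have := hd u v h; omega)
        exact ⟨r, hr, .head h hur⟩
  choose ρ hρ hρr using fun u => hex (d u) u le_rfl
  have huniq : ∀ a r s, p r = none → p s = none →
      Relation.ReflTransGen (fun a b => p a = some b) a r →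
      Relation.ReflTransGen (fun a b => p a = some b) a s → r = s := by
    intro a r s hr hs har
    induction har using Relation.ReflTransGen.head_induction_on with
    | refl =>
      intro has
      rcases has.cases_head with e | ⟨c, hc, -⟩
      · exact e
      · rw [hr] at hc
        cases hc
    | head hab _ ih =>
      intro has
      rcases has.cases_head with e | ⟨c, hc, hcs⟩
      · rw [e, hs] at hab
        cases hab
      · rw [hab] at hc
        cases hc
        exact ih hcs
  exact ⟨ρ, hρ, fun u v huv => huniq u _ _ (hρ u) (hρ v) (hρr u) (.head huv (hρr v)),
    fun u hu => huniq u _ _ (hρ u) hu (hρr u) .refl⟩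

/-- Hanging the root `x` below a vertex `v` of another tree yields a forest. -/
lemma IsForest.update {W : Type} [DecidableEq W] {p : W → Option W} (hp : IsForest p) {ρ : W → W}
    (hρ : ∀ u v, p u = some v → ρ u = ρ v) (hroot : ∀ u, p u = none → ρ u = u) {x v : W}
    (hx : p x = none) (hxv : x ≠ ρ v) : IsForest (Function.update p x (some v)) := by
  obtain ⟨d, hd⟩ := hp
  -- the tree rooted at `x` is lifted above `v`
  refine ⟨fun u => d u + if ρ u = x then d v + 1 else 0, fun u w huw => ?_⟩
  by_cases hu : u = x
  · subst hu
    rw [Function.update_self] at huw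
    cases huw
    simp only [hroot u hx, if_true, if_neg (Ne.symm hxv)]
    omega
  · rw [Function.update_of_ne hu] at huw
    have := hd u w huw
    simp only [hρ u w huw]
    omega

open Classical in
/-- The rooted forests on `N + 1` labelled vertices with exactly `j` edges. -/
noncomputable def forests (N j : ℕ) : Finset (Fin (N + 1) → Option (Fin (N + 1))) :=
  Finset.univ.filter fun p => IsForest p ∧ (Finset.univ.filter fun u => p u ≠ none).card = j

/-- Pitman's double counting: a forest with `j` edges becomes one with `j + 1` edges by joining
a root to any vertex of another tree, and every forest with a marked edge arises once. -/
lemma forests_step (N j : ℕ) :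
    (forests N j).card * ((N + 1) * (N - j)) ≤ (forests N (j + 1)).card * (j + 1) := by
  classical
  have hex : ∀ p : Fin (N + 1) → Option (Fin (N + 1)), ∃ ρ : Fin (N + 1) → Fin (N + 1),
      IsForest p → (∀ u, p (ρ u) = none) ∧ (∀ u v, p u = some v → ρ u = ρ v) ∧
        ∀ u, p u = none → ρ u = u := by
    intro p
    by_cases hp : IsForest p
    · obtain ⟨ρ, h1, h2, h3⟩ := hp.exists_root
      exact ⟨ρ, fun _ => ⟨h1, h2, h3⟩⟩
    · exact ⟨id, fun h => absurd h hp⟩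
  choose ρ hρ using hex
  let S : Finset ((Fin (N + 1) → Option (Fin (N + 1))) × (Fin (N + 1) × Fin (N + 1))) :=
    (forests N j ×ˢ Finset.univ).filter fun q => q.1 q.2.2 = none ∧ q.2.2 ≠ ρ q.1 q.2.1
  let T : Finset ((Fin (N + 1) → Option (Fin (N + 1))) × Fin (N + 1)) :=
    (forests N (j + 1) ×ˢ Finset.univ).filter fun q => q.1 q.2 ≠ none
  have hS : S.card = (forests N j).card * ((N + 1) * (N - j)) := by
    rw [Finset.card_filter, Finset.sum_product]
    refine Finset.sum_const_nat fun p hp => ?_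
    obtain ⟨hpf, hpc⟩ := (Finset.mem_filter.1 hp).2
    rw [← Finset.univ_product_univ, Finset.sum_product]
    have hc : ∀ v ∈ (Finset.univ : Finset (Fin (N + 1))),
        ∑ x, (if p x = none ∧ x ≠ ρ p v then 1 else 0) = N - j := by
      intro v _
      rw [← Finset.card_filter]
      have e : Finset.univ.filter (fun x => p x = none ∧ x ≠ ρ p v) =
          (Finset.univ.filter fun x => ¬ p x ≠ none).erase (ρ p v) := by
        ext x
        simp [and_comm]
      rw [e, Finset.card_erase_of_mem (by simpa using (hρ p hpf).1 v)]
      have := Finset.card_filter_add_card_filter_not (s := (Finset.univ : Finset (Fin (N + 1))))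
        (fun x => p x ≠ none)
      rw [hpc, Finset.card_univ, Fintype.card_fin] at this
      omega
    rw [Finset.sum_congr rfl hc]
    simp
  have hT : T.card = (forests N (j + 1)).card * (j + 1) := by
    rw [Finset.card_filter, Finset.sum_product]
    refine Finset.sum_const_nat fun p hp => ?_
    rw [← Finset.card_filter]
    exact (Finset.mem_filter.1 hp).2.2
  rw [← hS, ← hT]
  refine Finset.card_le_card_of_injOn
    (fun q => (Function.update q.1 q.2.2 (some q.2.1), q.2.2)) ?_ ?_
  · rintro ⟨p, v, x⟩ hq
    obtain ⟨hp, hx, hxv⟩ := Finset.mem_filter.1 hq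
    obtain ⟨hpf, hpc⟩ := (Finset.mem_filter.1 (Finset.mem_product.1 hp).1).2
    obtain ⟨h1, h2, h3⟩ := hρ p hpf
    refine Finset.mem_filter.2 ⟨Finset.mem_product.2 ⟨Finset.mem_filter.2
      ⟨Finset.mem_univ _, hpf.update h2 h3 hx hxv, ?_⟩, Finset.mem_univ _⟩, by simp⟩
    have e : Finset.univ.filter (fun u => Function.update p x (some v) u ≠ none) =
        insert x (Finset.univ.filter fun u => p u ≠ none) := by
      ext u
      by_cases hu : u = x
      · simp [hu]
      · simp [hu]
    rw [e, Finset.card_insert_of_notMem (by simpa using hx), hpc]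
  · rintro ⟨p, v, x⟩ hq ⟨p', v', x'⟩ hq' e
    obtain ⟨-, hx, -⟩ := Finset.mem_filter.1 hq
    obtain ⟨-, hx', -⟩ := Finset.mem_filter.1 hq'
    simp only [Prod.mk.injEq] at e hx hx'
    obtain ⟨e, rfl⟩ := e
    have hv : v = v' := by simpa using congrFun e x
    have hpp : p = p' := by
      ext1 u
      by_cases hu : u = x
      · rw [hu, hx, hx']
      · simpa [hu] using congrFun e u
    rw [hv, hpp]

lemma le_card_forests (N j : ℕ) : N.choose j * (N + 1) ^ j ≤ (forests N j).card := by
  classical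
  induction j with
  | zero =>
    simp only [Nat.choose_zero_right, pow_zero, mul_one]
    refine Finset.card_pos.2 ⟨fun _ => none, ?_⟩
    exact Finset.mem_filter.2 ⟨Finset.mem_univ _, ⟨fun _ => 0, by simp⟩, by simp⟩
  | succ j ih =>
    refine Nat.le_of_mul_le_mul_right ?_ (Nat.succ_pos j)
    calc N.choose (j + 1) * (N + 1) ^ (j + 1) * (j + 1)
        = (N.choose (j + 1) * (j + 1)) * (N + 1) ^ (j + 1) := by ring
      _ = N.choose j * (N + 1) ^ j * ((N + 1) * (N - j)) := by
          rw [Nat.choose_succ_right_eq]; ring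
      _ ≤ _ := (Nat.mul_le_mul_right _ ih).trans (forests_step N j)

/-- The undirected graph underlying a rooted forest. The clause `u ≠ v` makes it a simple graph for
every `p`; it is automatic for forests. -/
def forestGraph {W : Type} (p : W → Option W) : SimpleGraph W where
  Adj u v := u ≠ v ∧ (p u = some v ∨ p v = some u)
  symm := ⟨fun _ _ h => ⟨h.1.symm, h.2.symm⟩⟩
  loopless := ⟨fun _ h => h.1 rfl⟩

/-- A forest with one edge fewer than vertices has a single root, and its graph is a tree. -/
lemma forestGraph_isTree {N : ℕ} {p : Fin (N + 1) → Option (Fin (N + 1))}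
    (hp : p ∈ forests N N) : ∃ r, p r = none ∧ (∀ u, p u = none → u = r) ∧
      (forestGraph p).IsTree := by
  classical
  obtain ⟨hpf, hpc⟩ := (Finset.mem_filter.1 hp).2
  have hroots := Finset.card_filter_add_card_filter_not
    (s := (Finset.univ : Finset (Fin (N + 1)))) (fun x => p x ≠ none)
  rw [hpc, Finset.card_univ, Fintype.card_fin, Nat.add_left_cancel_iff, Finset.card_eq_one] at hroots
  obtain ⟨r, hr⟩ := hroots
  have hr' : ∀ u, p u = none ↔ u = r := by
    intro u
    have := Finset.ext_iff.1 hr u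
    simpa using this
  refine ⟨r, (hr' r).2 rfl, fun u => (hr' u).1, ?_⟩
  obtain ⟨d, hd⟩ := hpf
  have hreach : ∀ M u, d u ≤ M → (forestGraph p).Reachable u r := by
    intro M
    induction M with
    | zero =>
      intro u hu
      rcases h : p u with _ | v
      · rw [(hr' u).1 h]
      · have := hd u v h
        omega
    | succ M ih =>
      intro u hu
      rcases h : p u with _ | v
      · rw [(hr' u).1 h]
      · have hlt := hd u v h
        have hadj : (forestGraph p).Adj u v := ⟨fun e => by rw [e] at hlt; omega, Or.inl h⟩
        exact hadj.reachable.trans (ih v (by omega))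
  have hconn : (forestGraph p).Connected :=
    { preconnected := fun u v => (hreach _ u le_rfl).trans (hreach _ v le_rfl).symm
      nonempty := ⟨r⟩ }
  rw [SimpleGraph.isTree_iff_connected_and_card]
  refine ⟨hconn, le_antisymm ?_ hconn.card_vert_le_card_edgeSet_add_one⟩
  rw [Nat.card_eq_fintype_card (α := Fin (N + 1)), Fintype.card_fin]
  refine Nat.succ_le_succ ?_
  have hsub : (forestGraph p).edgeSet ⊆
      ((Finset.univ.filter fun u => p u ≠ none).image fun u => s(u, (p u).getD u) : Finset _) := by
    intro e
    induction e using Sym2.ind with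
    | _ u v =>
      rintro ⟨-, h | h⟩
      · simp only [Finset.coe_image, Set.mem_image, Finset.mem_coe, Finset.mem_filter]
        exact ⟨u, ⟨Finset.mem_univ _, by simp [h]⟩, by simp [h]⟩
      · simp only [Finset.coe_image, Set.mem_image, Finset.mem_coe, Finset.mem_filter]
        exact ⟨v, ⟨Finset.mem_univ _, by simp [h]⟩, by simp [h, Sym2.eq_swap]⟩
  have h1 := Set.ncard_le_ncard hsub (Set.toFinite _)
  rw [Set.ncard_coe_finset] at h1
  exact h1.trans (Finset.card_image_le.trans hpc.le)

/-- One half of Cayley's formula: a rooted forest with `N` edges on `N + 1` vertices is determined by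
its root and its underlying tree. -/
lemma pow_le_card_trees (N : ℕ) :
    (N + 1) ^ N ≤ (N + 1) * Nat.card {G : SimpleGraph (Fin (N + 1)) // G.IsTree} := by
  classical
  have h := le_card_forests N N
  rw [Nat.choose_self, one_mul] at h
  refine h.trans ?_
  choose r hr hru htree using fun p : {p // p ∈ forests N N} => forestGraph_isTree p.2
  rw [← Fintype.card_coe, ← Nat.card_eq_fintype_card]
  refine (Nat.card_le_card_of_injective
    (fun p => (r p, (⟨forestGraph p.1, htree p⟩ : {G : SimpleGraph (Fin (N + 1)) // G.IsTree})))
    ?_).trans (by simp)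
  intro p q e
  simp only [Prod.mk.injEq, Subtype.mk.injEq] at e
  obtain ⟨er, eg⟩ := e
  obtain ⟨d, hd⟩ := (Finset.mem_filter.1 p.2).2.1
  have hpq : ∀ M u, d u ≤ M → p.1 u = q.1 u := by
    intro M
    induction M using Nat.strong_induction_on with
    | _ M ih =>
      intro u hu
      rcases h : p.1 u with _ | w
      · rw [hru p u h, er, hr q]
      · have hlt := hd u w h
        have hadj : (forestGraph p.1).Adj u w := ⟨fun e => by rw [e] at hlt; omega, Or.inl h⟩
        rw [eg] at hadj
        rcases hadj.2 with h' | h'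
        · exact h'.symm
        · rw [← ih (d w) (by omega) w le_rfl] at h'
          have := hd w u h'
          omega
  exact Subtype.ext (funext fun u => hpq _ u le_rfl)

/-! ### Assembly -/

/-- Stirling's formula in the crude form needed to compare `n!` with the number of trees. -/
lemma eventually_factorial_le : ∀ᶠ n : ℕ in atTop,
    (n.factorial : ℝ) ≤ 4 * n * (n / Real.exp 1) ^ n := by
  have hpi : √Real.pi < 2 := by
    rw [Real.sqrt_lt' (by norm_num)]
    linarith [Real.pi_lt_four]
  filter_upwards [Stirling.tendsto_stirlingSeq_sqrt_pi.eventually_lt_const hpi,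
    eventually_ge_atTop 1] with n hn h1
  have h1' : (1 : ℝ) ≤ n := by exact_mod_cast h1
  rw [Stirling.stirlingSeq, div_lt_iff₀ (by positivity)] at hn
  refine hn.le.trans ?_
  have hs : √(2 * n : ℝ) ≤ 2 * n := by
    rw [Real.sqrt_le_left (by positivity)]
    nlinarith
  calc 2 * (√(2 * n : ℝ) * (n / Real.exp 1) ^ n) ≤ 2 * ((2 * n) * (n / Real.exp 1) ^ n) := by
        gcongr
    _ = _ := by ring

/-- Markov's inequality for a negative moment, bounding the number of trees with few subtrees. -/
lemma card_bad_le {s c b : ℝ} (hs : 0 < s) (hb : 0 < b)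
    (hL : ∀ n : ℕ, L (n + 1) (fun x => (x : ℝ) ^ (-s)) ≤ Real.exp ((1 - s * c) * (n + 1)))
    (N : ℕ) : (Nat.card {G : SimpleGraph (Fin (N + 1)) //
        G.IsTree ∧ ¬ b ^ (N + 1) ≤ (subtreeCount G : ℝ)} : ℝ) ≤
      N.factorial * Real.exp ((1 - s * (c - Real.log b)) * (N + 1)) := by
  classical
  obtain ⟨v, hv, hsum⟩ := exists_lower_statistic N
  set F : Finset (SimpleGraph (Fin (N + 1))) :=
    Finset.univ.filter fun G => G.IsTree ∧ ¬ b ^ (N + 1) ≤ (subtreeCount G : ℝ) with hF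
  have hcard : Nat.card {G : SimpleGraph (Fin (N + 1)) //
      G.IsTree ∧ ¬ b ^ (N + 1) ≤ (subtreeCount G : ℝ)} = F.card := by
    rw [Nat.card_eq_fintype_card, Fintype.card_subtype]
  have h1 := hsum (fun x => (x : ℝ) ^ (-s)) (fun x => by positivity) F
    fun G hG => (Finset.mem_filter.1 hG).2.1
  have h2 : (F.card : ℝ) * (b ^ (N + 1)) ^ (-s) ≤ ∑ G ∈ F, (v G : ℝ) ^ (-s) := by
    rw [← nsmul_eq_mul]
    refine Finset.card_nsmul_le_sum _ _ _ fun G hG => ?_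
    obtain ⟨-, hG, hbad⟩ := Finset.mem_filter.1 hG
    obtain ⟨hv1, hv2⟩ := hv G hG
    have hv1' : (0 : ℝ) < v G := by exact_mod_cast hv1
    refine Real.rpow_le_rpow_of_nonpos hv1' ?_ (by linarith)
    exact le_trans (by exact_mod_cast hv2) (not_le.1 hbad).le
  have h3 : (F.card : ℝ) * (b ^ (N + 1)) ^ (-s) ≤
      N.factorial * Real.exp ((1 - s * c) * (N + 1)) :=
    h2.trans (h1.trans (mul_le_mul_of_nonneg_left (hL N) (by positivity)))
  have h4 : ((b ^ (N + 1) : ℝ)) ^ (-s) = Real.exp (-(s * Real.log b * (N + 1))) := by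
    rw [Real.rpow_def_of_pos (by positivity), Real.log_pow]
    push_cast
    ring_nf
  rw [hcard]
  rw [h4, Real.exp_neg, ← div_eq_mul_inv, div_le_iff₀ (Real.exp_pos _), mul_assoc,
    ← Real.exp_add] at h3
  rwa [show (1 - s * c) * (N + 1) + s * Real.log b * (N + 1) =
    (1 - s * (c - Real.log b)) * ((N : ℝ) + 1) by ring] at h3

/-- The proportion of trees with few subtrees tends to zero. -/
lemma tendsto_bad {s c b : ℝ} (hs : 0 < s) (hb : 0 < b) (hbc : Real.log b < c)
    (hL : ∀ n : ℕ, L (n + 1) (fun x => (x : ℝ) ^ (-s)) ≤ Real.exp ((1 - s * c) * (n + 1))) :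
    Tendsto (fun n : ℕ => treeProb n fun G => ¬ b ^ n ≤ (subtreeCount G : ℝ)) atTop (𝓝 0) := by
  set δ := s * (c - Real.log b) with hδ
  have hδ0 : 0 < δ := mul_pos hs (by linarith)
  have hlim : Tendsto (fun n : ℕ => 4 * ((n : ℝ) ^ 2 * Real.exp (-δ) ^ n)) atTop (𝓝 0) := by
    have := tendsto_pow_const_mul_const_pow_of_abs_lt_one 2 (r := Real.exp (-δ)) (by
      rw [abs_of_pos (Real.exp_pos _), Real.exp_lt_one_iff]
      linarith)
    simpa using this.const_mul 4
  refine squeeze_zero' (Eventually.of_forall fun n => by unfold treeProb; positivity) ?_ hlim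
  filter_upwards [eventually_factorial_le, eventually_ge_atTop 1] with n hn h1
  obtain ⟨N, rfl⟩ : ∃ N, n = N + 1 := ⟨n - 1, by omega⟩
  have hbad := card_bad_le hs hb hL N
  have htree : ((N : ℝ) + 1) ^ N ≤
      (N + 1) * (Nat.card {G : SimpleGraph (Fin (N + 1)) // G.IsTree} : ℝ) := by
    exact_mod_cast pow_le_card_trees N
  have hN : (0 : ℝ) < (N : ℝ) + 1 := by positivity
  have hT : (0 : ℝ) < (Nat.card {G : SimpleGraph (Fin (N + 1)) // G.IsTree} : ℝ) :=
    pos_of_mul_pos_right (lt_of_lt_of_le (by positivity) htree) hN.le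
  rw [treeProb, div_le_iff₀ hT]
  refine hbad.trans ?_
  rw [← hδ]
  refine le_of_mul_le_mul_left ?_ hN
  rw [Nat.factorial_succ] at hn
  push_cast at hn ⊢
  have hexp : Real.exp ((1 - δ) * (N + 1)) = Real.exp 1 ^ (N + 1) * Real.exp (-δ) ^ (N + 1) := by
    rw [← mul_pow, ← Real.exp_add, ← Real.exp_nat_mul]
    push_cast
    ring_nf
  calc ((N : ℝ) + 1) * (N.factorial * Real.exp ((1 - δ) * (N + 1)))
      = ((N + 1) * N.factorial) * Real.exp ((1 - δ) * (N + 1)) := by ring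
    _ ≤ (4 * (N + 1) * ((N + 1) / Real.exp 1) ^ (N + 1)) * Real.exp ((1 - δ) * (N + 1)) := by
        gcongr
    _ = 4 * ((N + 1) ^ 2 * Real.exp (-δ) ^ (N + 1)) * (N + 1) ^ N := by
        rw [hexp, div_pow]
        field_simp
        ring
    _ ≤ 4 * ((N + 1) ^ 2 * Real.exp (-δ) ^ (N + 1)) *
        ((N + 1) * (Nat.card {G : SimpleGraph (Fin (N + 1)) // G.IsTree} : ℝ)) := by
        gcongr
    _ = _ := by ring

lemma treeProb_add_not (N : ℕ) (q : SimpleGraph (Fin (N + 1)) → Prop) :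
    treeProb (N + 1) q = 1 - treeProb (N + 1) fun G => ¬ q G := by
  classical
  have hT : (Nat.card {G : SimpleGraph (Fin (N + 1)) // G.IsTree} : ℝ) ≠ 0 := by
    have h := pow_le_card_trees N
    have h0 : 0 < (N + 1) ^ N := by positivity
    have : Nat.card {G : SimpleGraph (Fin (N + 1)) // G.IsTree} ≠ 0 := by
      intro e
      rw [e] at h
      omega
    exact_mod_cast this
  rw [treeProb, treeProb, eq_sub_iff_add_eq, ← add_div, div_eq_one_iff_eq hT, ← Nat.cast_add]
  congr 1
  simp only [Nat.card_eq_fintype_card, Fintype.card_subtype]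
  rw [← Finset.filter_filter, ← Finset.filter_filter]
  exact Finset.card_filter_add_card_filter_not _

end SubtreeBound

/-- A.a.s. the number of subtrees of a uniformly random labelled tree on `n` vertices
is at least `1.41805 ^ n`. -/
theorem aas_subtree_lower_bound_141805 :
    Tendsto (fun n : ℕ =>
      treeProb n (fun G => (1.41805 : ℝ) ^ n ≤ (subtreeCount G : ℝ)))
      atTop (𝓝 1) := by
  obtain ⟨s, hs, hL⟩ := SubtreeBound.exists_moment_bound 0.349284 (by norm_num) 28
    SubtreeBound.truncated_mean_gt
  have hlog : Real.log 1.41805 < 0.349284 :=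
    (Real.log_lt_iff_lt_exp (by norm_num)).2 SubtreeBound.base_lt_exp
  have h := (SubtreeBound.tendsto_bad hs (by norm_num) hlog hL).const_sub 1
  rw [sub_zero] at h
  refine h.congr' ?_
  filter_upwards [eventually_ge_atTop 1] with n hn
  obtain ⟨N, rfl⟩ : ∃ N, n = N + 1 := ⟨n - 1, by omega⟩
  exact (SubtreeBound.treeProb_add_not N _).symm
end
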